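/- arXiv:1601.04032 — 7 statements merged into one kernel-verified Lean document; each statement's English description precedes it below -/
import Mathlib

section
/- Let α, β ∈ ℂ, let U ⊆ ℂ be open, and let p, q : U → ℂ be holomorphic functions satisfying p′(z) = −q(z)² − z·p(z) − α and q′(z) = p(z)² + z·q(z) + β on U. Then the function w(z) = p(z) + q(z) − z satisfies the second-order differential equation 2·w·w″ = (w′)² − w⁴ − 4z·w³ − (2α + 2β + 3z²)·w² − (α − β + 1)² at every point of U. -/
/-- If holomorphic `p, q` on an open set `U ⊆ ℂ` solve the Hamiltonian
system `p′ = −q² − z·p − α`, `q′ = p² + z·q + β`, then `w = p + q − z` satisfies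
`2ww″ = (w′)² − w⁴ − 4zw³ − (2α+2β+3z²)w² − (α−β+1)²` on `U`. -/
theorem stmt_0 (α β : ℂ) (U : Set ℂ) (hU : IsOpen U) (p q : ℂ → ℂ)
    (hp : DifferentiableOn ℂ p U) (hq : DifferentiableOn ℂ q U)
    (hp' : ∀ z ∈ U, deriv p z = -(q z) ^ 2 - z * p z - α)
    (hq' : ∀ z ∈ U, deriv q z = (p z) ^ 2 + z * q z + β) :
    ∀ z ∈ U,
      2 * (p z + q z - z) * deriv (deriv (fun w => p w + q w - w)) z =
        (deriv (fun w => p w + q w - w) z) ^ 2 - (p z + q z - z) ^ 4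
          - 4 * z * (p z + q z - z) ^ 3
          - (2 * α + 2 * β + 3 * z ^ 2) * (p z + q z - z) ^ 2
          - (α - β + 1) ^ 2 := by
  have hP : ∀ z ∈ U, HasDerivAt p (-(q z) ^ 2 - z * p z - α) z := fun z hz => by
    rw [← hp' z hz]
    exact (hp.differentiableAt (hU.mem_nhds hz)).hasDerivAt
  have hQ : ∀ z ∈ U, HasDerivAt q ((p z) ^ 2 + z * q z + β) z := fun z hz => by
    rw [← hq' z hz]
    exact (hq.differentiableAt (hU.mem_nhds hz)).hasDerivAt
  have h1 : ∀ z ∈ U, deriv (fun w => p w + q w - w) z =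
      (p z - q z) * (p z + q z - z) - (α - β + 1) := fun z hz => by
    have h := (((hP z hz).add (hQ z hz)).sub (hasDerivAt_id z)).deriv
    refine Eq.trans h ?_
    ring
  intro z hz
  have h2 : deriv (deriv (fun w => p w + q w - w)) z =
      deriv (fun z => (p z - q z) * (p z + q z - z) - (α - β + 1)) z := by
    apply Filter.EventuallyEq.deriv_eq
    filter_upwards [hU.mem_nhds hz] with x hx using h1 x hx
  have h3 := ((((hP z hz).sub (hQ z hz)).mul
    (((hP z hz).add (hQ z hz)).sub (hasDerivAt_id z))).sub_const (α - β + 1)).deriv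
  rw [h2, h1 z hz]
  refine Eq.trans (congrArg _ h3) ?_
  simp only [Pi.sub_apply, Pi.add_apply, id]
  ring
end

section
/- Let α, β ∈ ℂ, let ω ∈ ℂ satisfy ω³ = 1, let U ⊆ ℂ be open, and let p, q : U → ℂ be holomorphic functions satisfying p′(z) = −q(z)² − z·p(z) − α and q′(z) = p(z)² + z·q(z) + β on U. Then the function w̃(z) = ω·p(z) + ω²·q(z) − z satisfies 2·w̃·w̃″ = (w̃′)² − w̃⁴ − 4z·w̃³ − (2ωα + 2ω²β + 3z²)·w̃² − (ωα − ω²β + 1)² at every point of U. -/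
/-- If holomorphic `p, q` on an open set `U ⊆ ℂ` solve the Hamiltonian
system and `ω³ = 1`, then `w̃ = ω·p + ω²·q − z` satisfies
`2w̃w̃″ = (w̃′)² − w̃⁴ − 4zw̃³ − (2ωα+2ω²β+3z²)w̃² − (ωα−ω²β+1)²` on `U`. -/
theorem stmt_1 (α β ω : ℂ) (hω : ω ^ 3 = 1) (U : Set ℂ) (hU : IsOpen U) (p q : ℂ → ℂ)
    (hp : DifferentiableOn ℂ p U) (hq : DifferentiableOn ℂ q U)
    (hp' : ∀ z ∈ U, deriv p z = -(q z) ^ 2 - z * p z - α)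
    (hq' : ∀ z ∈ U, deriv q z = (p z) ^ 2 + z * q z + β) :
    ∀ z ∈ U,
      2 * (ω * p z + ω ^ 2 * q z - z) *
          deriv (deriv (fun w => ω * p w + ω ^ 2 * q w - w)) z =
        (deriv (fun w => ω * p w + ω ^ 2 * q w - w) z) ^ 2
          - (ω * p z + ω ^ 2 * q z - z) ^ 4
          - 4 * z * (ω * p z + ω ^ 2 * q z - z) ^ 3
          - (2 * ω * α + 2 * ω ^ 2 * β + 3 * z ^ 2) * (ω * p z + ω ^ 2 * q z - z) ^ 2
          - (ω * α - ω ^ 2 * β + 1) ^ 2 := by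
  have e4 : ω ^ 4 = ω := by linear_combination ω * hω
  have hP : ∀ z ∈ U, HasDerivAt (fun w => ω * p w)
      (-(ω ^ 2 * q z) ^ 2 - z * (ω * p z) - ω * α) z := by
    intro z hz
    have h := ((hp.differentiableAt (hU.mem_nhds hz)).hasDerivAt).const_mul ω
    rw [hp' z hz] at h
    refine h.congr_deriv ?_
    linear_combination ((q z) ^ 2) * e4
  have hQ : ∀ z ∈ U, HasDerivAt (fun w => ω ^ 2 * q w)
      ((ω * p z) ^ 2 + z * (ω ^ 2 * q z) + ω ^ 2 * β) z := by
    intro z hz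
    have h := ((hq.differentiableAt (hU.mem_nhds hz)).hasDerivAt).const_mul (ω ^ 2)
    rw [hq' z hz] at h
    refine h.congr_deriv ?_
    ring
  have hW : ∀ z ∈ U, HasDerivAt (fun w => ω * p w + ω ^ 2 * q w - w)
      ((ω * p z - ω ^ 2 * q z) * (ω * p z + ω ^ 2 * q z - z) - (ω * α - ω ^ 2 * β + 1)) z := by
    intro z hz
    refine (((hP z hz).add (hQ z hz)).sub (hasDerivAt_id z)).congr_deriv ?_
    ring
  intro z hz
  have hev : deriv (fun w => ω * p w + ω ^ 2 * q w - w) =ᶠ[nhds z] fun z =>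
      (ω * p z - ω ^ 2 * q z) * (ω * p z + ω ^ 2 * q z - z) - (ω * α - ω ^ 2 * β + 1) := by
    filter_upwards [hU.mem_nhds hz] with y hy using (hW y hy).deriv
  have h2 := (((hP z hz).sub (hQ z hz)).mul (hW z hz)).sub_const (ω * α - ω ^ 2 * β + 1)
  rw [hev.deriv_eq, (hW z hz).deriv]
  erw [h2.deriv]
  simp only [Pi.sub_apply]
  ring
end

section
/- Let α, β ∈ ℂ, let D ⊆ ℂ be an open set containing λ, and let p, q be holomorphic on D ∖ {λ} and satisfy p′(z) = −q(z)² − z·p(z) − α and q′(z) = p(z)² + z·q(z) + β there. Suppose |p(z)| → ∞ as z → λ. Then there exists ρ ∈ ℂ with ρ³ = 1 such that (z − λ)·p(z) → ρ and (z − λ)·q(z) → −ρ² as z → λ; in particular p and q have simple poles at λ with residues ρ and −ρ² respectively. -/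
open Topology Filter

lemma aux_mero_of_inv {p : ℂ → ℂ} {l : ℂ} (hd : ∀ᶠ z in 𝓝[≠] l, DifferentiableAt ℂ p z)
    (hpole : Tendsto (fun z => ‖p z‖) (𝓝[≠] l) atTop) : MeromorphicAt p l := by
  have h0 : Tendsto (fun z => (p z)⁻¹) (𝓝[≠] l) (𝓝 0) :=
    tendsto_inv₀_cobounded.comp (tendsto_norm_atTop_iff_cobounded.1 hpole)
  have han : AnalyticAt ℂ (Function.update (fun z => (p z)⁻¹) l 0) l := by
    apply Complex.analyticAt_of_differentiable_on_punctured_nhds_of_continuousAt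
    · filter_upwards [hd, hpole.eventually_gt_atTop 0, self_mem_nhdsWithin] with z hz hz0 hzl
      have hne : p z ≠ 0 := norm_pos_iff.1 hz0
      refine (hz.inv hne).congr_of_eventuallyEq ?_
      filter_upwards [isOpen_ne.mem_nhds hzl] with w hw
      rw [Function.update_of_ne hw]; rfl
    · exact continuousAt_update_same.2 h0
  have h1 : MeromorphicAt (fun z => (p z)⁻¹) l := MeromorphicAt.update_iff.1 han.meromorphicAt
  exact MeromorphicAt.inv_iff.1 h1

lemma aux_mero_of_sq {q : ℂ → ℂ} {l : ℂ} (hd : ∀ᶠ z in 𝓝[≠] l, DifferentiableAt ℂ q z)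
    (hq : MeromorphicAt (fun z => q z ^ 2) l) : MeromorphicAt q l := by
  obtain ⟨n, hn⟩ := hq
  set h : ℂ → ℂ := fun z => (z - l) ^ (n + 1) * q z with hh
  have hlim : Tendsto h (𝓝[≠] l) (𝓝 0) := by
    have h2 : Tendsto (fun z => (z - l) ^ (n + 2) * ((z - l) ^ n • q z ^ 2)) (𝓝 l) (𝓝 0) := by
      have : ContinuousAt (fun z => (z - l) ^ (n + 2) * ((z - l) ^ n • q z ^ 2)) l :=
        ContinuousAt.mul (by fun_prop) hn.continuousAt
      simpa [ContinuousAt] using this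
    have h3 : Tendsto (fun z => ‖h z‖ ^ 2) (𝓝[≠] l) (𝓝 0) := by
      have := (h2.mono_left (nhdsWithin_le_nhds (s := {l}ᶜ))).norm
      rw [norm_zero] at this
      refine this.congr fun z => ?_
      rw [← norm_pow]
      congr 1
      simp only [hh, smul_eq_mul]
      ring
    have h4 := h3.sqrt
    simp only [Real.sqrt_zero, Real.sqrt_sq (norm_nonneg _)] at h4
    exact tendsto_zero_iff_norm_tendsto_zero.2 h4
  have han : AnalyticAt ℂ (Function.update h l 0) l := by
    apply Complex.analyticAt_of_differentiable_on_punctured_nhds_of_continuousAt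
    · filter_upwards [hd, self_mem_nhdsWithin] with z hz hzl
      have : DifferentiableAt ℂ h z := by fun_prop
      refine this.congr_of_eventuallyEq ?_
      filter_upwards [isOpen_ne.mem_nhds hzl] with w hw
      rw [Function.update_of_ne hw]
    · exact continuousAt_update_same.2 hlim
  have heq : Function.update h l 0 = h := by
    ext z
    by_cases hz : z = l
    · subst hz; simp [hh]
    · rw [Function.update_of_ne hz]
  rw [heq] at han
  exact ⟨n + 1, han⟩

lemma aux_order {f w G : ℂ → ℂ} {l c : ℂ} {m : ℤ} (hf : MeromorphicAt f l)
    (hw : AnalyticAt ℂ w l)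
    (hm : meromorphicOrderAt f l = m) (hm0 : m < 0)
    (hG : G =ᶠ[𝓝[≠] l] deriv f + (w * f + fun _ => c)) :
    meromorphicOrderAt G l = ((m - 1 : ℤ) : WithTop ℤ) := by
  have hd := meromorphicOrderAt_deriv_eq_sub_one (n := m)
    (by exact_mod_cast hm0.ne) hm
  have hwf : MeromorphicAt (w * f) l := hw.meromorphicAt.mul hf
  have hc : MeromorphicAt (fun _ : ℂ => c) l := MeromorphicAt.const c l
  have h1 : (m : WithTop ℤ) ≤ meromorphicOrderAt (w * f) l := by
    rw [meromorphicOrderAt_mul hw.meromorphicAt hf, hm]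
    exact le_add_of_nonneg_left hw.meromorphicOrderAt_nonneg
  have h2 : (m : WithTop ℤ) ≤ meromorphicOrderAt (fun _ : ℂ => c) l :=
    le_trans (by exact_mod_cast hm0.le) (analyticAt_const.meromorphicOrderAt_nonneg)
  have h3 := (le_min h1 h2).trans (meromorphicOrderAt_add hwf hc)
  rw [meromorphicOrderAt_congr hG, meromorphicOrderAt_add_eq_left_of_lt (hwf.add hc), hd]
  rw [hd]
  refine lt_of_lt_of_le ?_ h3
  exact_mod_cast sub_one_lt m

lemma aux_res {f : ℂ → ℂ} {l : ℂ} (hf : MeromorphicAt f l)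
    (hm : meromorphicOrderAt f l = ((-1 : ℤ) : WithTop ℤ)) :
    ∃ ρ : ℂ, ρ ≠ 0 ∧ Tendsto (fun z => (z - l) * f z) (𝓝[≠] l) (𝓝 ρ) ∧
      Tendsto (fun z => (z - l) ^ 2 * deriv f z) (𝓝[≠] l) (𝓝 (-ρ)) := by
  obtain ⟨g, hga, hg0, hg⟩ := (meromorphicOrderAt_eq_int_iff hf).1 hm
  have hg' : f =ᶠ[𝓝[≠] l] fun z => (z - l)⁻¹ * g z := by
    filter_upwards [hg] with z hz
    simpa using hz
  refine ⟨g l, hg0, ?_, ?_⟩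
  · refine (hga.continuousAt.tendsto.mono_left nhdsWithin_le_nhds).congr' ?_
    filter_upwards [hg', self_mem_nhdsWithin] with z hz hzl
    have : z - l ≠ 0 := sub_ne_zero.2 hzl
    rw [hz]; field_simp
  · have hc : ContinuousAt (fun z => (z - l) * deriv g z - g z) l :=
      ((by fun_prop : ContinuousAt (fun z => z - l) l).mul hga.deriv.continuousAt).sub
        hga.continuousAt
    have := hc.tendsto.mono_left (nhdsWithin_le_nhds (s := {l}ᶜ))
    simp only [sub_self, zero_mul, zero_sub] at this
    refine this.congr' ?_
    filter_upwards [hg'.nhdsNE_deriv, self_mem_nhdsWithin,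
      hga.eventually_analyticAt.filter_mono nhdsWithin_le_nhds] with z hz hzl hgz
    have h0 : z - l ≠ 0 := sub_ne_zero.2 hzl
    have h1 : HasDerivAt (fun z => (z - l)⁻¹ * g z)
        (-1 / (z - l) ^ 2 * g z + (z - l)⁻¹ * deriv g z) z :=
      (((hasDerivAt_id z).sub_const l).inv h0).mul hgz.differentiableAt.hasDerivAt
    rw [hz, h1.deriv]
    field_simp
    ring

/-- At an isolated singularity `l` of a local solution `(p, q)` of the
Hamiltonian system at which `|p| → ∞`, both `p` and `q` have simple poles, with residues
`ρ` and `−ρ²` respectively, where `ρ` is some cube root of unity. -/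
theorem stmt_3 (α β : ℂ) (D : Set ℂ) (hD : IsOpen D) (l : ℂ) (hl : l ∈ D) (p q : ℂ → ℂ)
    (hp : DifferentiableOn ℂ p (D \ {l})) (hq : DifferentiableOn ℂ q (D \ {l}))
    (hp' : ∀ z ∈ D \ {l}, deriv p z = -(q z) ^ 2 - z * p z - α)
    (hq' : ∀ z ∈ D \ {l}, deriv q z = (p z) ^ 2 + z * q z + β)
    (hpole : Tendsto (fun z => ‖p z‖) (𝓝[≠] l) atTop) :
    ∃ ρ : ℂ, ρ ^ 3 = 1 ∧
      Tendsto (fun z => (z - l) * p z) (𝓝[≠] l) (𝓝 ρ) ∧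
      Tendsto (fun z => (z - l) * q z) (𝓝[≠] l) (𝓝 (-ρ ^ 2)) := by
  have hmem : ∀ᶠ z in 𝓝[≠] l, z ∈ D \ {l} := by
    filter_upwards [self_mem_nhdsWithin, nhdsWithin_le_nhds (hD.mem_nhds hl)] with z h1 h2
    exact ⟨h2, h1⟩
  have hopen : IsOpen (D \ {l}) := hD.sdiff isClosed_singleton
  have hpd : ∀ᶠ z in 𝓝[≠] l, DifferentiableAt ℂ p z :=
    hmem.mono fun z hz => hp.differentiableAt (hopen.mem_nhds hz)
  have hqd : ∀ᶠ z in 𝓝[≠] l, DifferentiableAt ℂ q z :=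
    hmem.mono fun z hz => hq.differentiableAt (hopen.mem_nhds hz)
  have hpm := aux_mero_of_inv hpd hpole
  have hE1 : -(q ^ 2) =ᶠ[𝓝[≠] l] deriv p + ((fun z => z) * p + fun _ => α) := by
    filter_upwards [hmem] with z hz
    simp only [Pi.add_apply, Pi.mul_apply, Pi.neg_apply, Pi.pow_apply, hp' z hz]
    ring
  have hE2 : p ^ 2 =ᶠ[𝓝[≠] l] deriv q + ((fun z => -z) * q + fun _ => -β) := by
    filter_upwards [hmem] with z hz
    simp only [Pi.add_apply, Pi.mul_apply, Pi.pow_apply, hq' z hz]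
    ring
  have hid : AnalyticAt ℂ (fun z : ℂ => z) l := analyticAt_id
  have hq2 : MeromorphicAt (q ^ 2) l := by
    rw [← MeromorphicAt.neg_iff]
    exact (hpm.deriv.add ((hid.meromorphicAt.mul hpm).add (MeromorphicAt.const α l))).congr
      hE1.symm
  have hqm : MeromorphicAt q l := aux_mero_of_sq hqd hq2
  have hplt : meromorphicOrderAt p l < 0 :=
    (tendsto_cobounded_iff_meromorphicOrderAt_neg hpm).1 (tendsto_norm_atTop_iff_cobounded.1 hpole)
  obtain ⟨m, hm⟩ := WithTop.ne_top_iff_exists.1 hplt.ne_top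
  have hm0 : m < 0 := by rw [← hm] at hplt; exact_mod_cast hplt
  have ho1 := aux_order hpm hid hm.symm hm0 hE1
  rw [← meromorphicOrderAt_neg, pow_two, meromorphicOrderAt_mul hqm hqm] at ho1
  have hqtop : meromorphicOrderAt q l ≠ ⊤ := by
    intro h
    rw [h, top_add] at ho1
    exact WithTop.coe_ne_top ho1.symm
  obtain ⟨n, hn⟩ := WithTop.ne_top_iff_exists.1 hqtop
  rw [← hn] at ho1
  have e1 : n + n = m - 1 := by exact_mod_cast ho1
  have ho2 := aux_order hqm hid.neg hn.symm (by omega) hE2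
  rw [pow_two, meromorphicOrderAt_mul hpm hpm, ← hm] at ho2
  have e2 : m + m = n - 1 := by exact_mod_cast ho2
  obtain rfl : m = -1 := by omega
  obtain rfl : n = -1 := by omega
  obtain ⟨ρ, hρ, hr1, hr2⟩ := aux_res hpm hm.symm
  obtain ⟨σ, hσ, hs1, hs2⟩ := aux_res hqm hn.symm
  have hz : Tendsto (fun z : ℂ => z) (𝓝[≠] l) (𝓝 l) := nhdsWithin_le_nhds
  have hzl : Tendsto (fun z : ℂ => z - l) (𝓝[≠] l) (𝓝 0) := by
    simpa using hz.sub_const l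
  have k1 : -ρ = -σ ^ 2 := by
    have : Tendsto (fun z => -((z - l) * q z) ^ 2 - z * (z - l) * ((z - l) * p z)
        - α * (z - l) ^ 2) (𝓝[≠] l) (𝓝 (-σ ^ 2 - l * 0 * ρ - α * 0 ^ 2)) :=
      (((hs1.pow 2).neg).sub ((hz.mul hzl).mul hr1)).sub ((hzl.pow 2).const_mul α)
    have h := tendsto_nhds_unique (hr2.congr' ?_) this
    · simpa using h
    · filter_upwards [hmem] with z hz
      rw [hp' z hz]; ring
  have k2 : -σ = ρ ^ 2 := by
    have : Tendsto (fun z => ((z - l) * p z) ^ 2 + z * (z - l) * ((z - l) * q z)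
        + β * (z - l) ^ 2) (𝓝[≠] l) (𝓝 (ρ ^ 2 + l * 0 * σ + β * 0 ^ 2)) :=
      ((hr1.pow 2).add ((hz.mul hzl).mul hs1)).add ((hzl.pow 2).const_mul β)
    have h := tendsto_nhds_unique (hs2.congr' ?_) this
    · simpa using h
    · filter_upwards [hmem] with z hz
      rw [hq' z hz]; ring
  have hσρ : σ = -ρ ^ 2 := by rw [← k2]; ring
  refine ⟨ρ, ?_, hr1, hσρ ▸ hs1⟩
  apply mul_left_cancel₀ hρ
  rw [hσρ] at k1
  linear_combination k1
end

section
/- Let α, β ∈ ℂ, let D ⊆ ℂ be an open set containing λ, and let p, q be holomorphic on D ∖ {λ} and satisfy p′(z) = −q(z)² − z·p(z) − α and q′(z) = p(z)² + z·q(z) + β there. Suppose p has a simple pole at λ with residue 1, i.e. (z − λ)·p(z) → 1 as z → λ. Then, as z → λ: p(z) − (z − λ)⁻¹ → λ/2, q(z) + (z − λ)⁻¹ → λ/2, (p(z) − (z − λ)⁻¹ − λ/2)/(z − λ) → 1 + (α − 2β)/3 − λ²/4, and (q(z) + (z − λ)⁻¹ − λ/2)/(z − λ) → 1 + (2α − β)/3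 + λ²/4. -/
open Topology Filter

lemma exp1 {F : ℂ → ℂ} {l : ℂ} (h : AnalyticAt ℂ F l) :
    ∃ G, AnalyticAt ℂ G l ∧ ∀ z, F z = F l + (z - l) * G z := by
  obtain ⟨s, hs⟩ := h
  refine ⟨dslope F l, ⟨_, hs.has_fpower_series_dslope_fslope⟩, fun z => ?_⟩
  have := sub_smul_dslope F l z
  simp only [smul_eq_mul] at this
  rw [this]; ring

lemma key {f : ℂ → ℂ} {l : ℂ} (hd : ∀ᶠ z in 𝓝[≠] l, DifferentiableAt ℂ f z) (C : ℝ)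
    (hb : ∀ᶠ z in 𝓝[≠] l, ‖(z - l) * f z‖ ≤ C) :
    ∃ c a : ℂ, ∃ A A' : ℂ → ℂ, ContinuousAt A l ∧ ContinuousAt A' l ∧
      ∀ᶠ z in 𝓝[≠] l, z - l ≠ 0 ∧ f z = c * (z - l)⁻¹ + a + (z - l) * A z ∧
        deriv f z = - c * ((z - l)⁻¹) ^ 2 + A z + (z - l) * A' z := by
  set g : ℂ → ℂ := fun z => (z - l) * f z with hg
  have hgd : ∀ᶠ z in 𝓝[≠] l, DifferentiableAt ℂ g z := by
    filter_upwards [hd] with z hz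
    fun_prop
  have hlim := Complex.tendsto_limUnder_of_differentiable_on_punctured_nhds_of_bounded_under
    (f := g) (c := l) hgd (by
      refine ⟨C + ‖g l‖, ?_⟩
      rw [eventually_map]
      filter_upwards [hb] with z hz
      exact (norm_sub_le _ _).trans (by gcongr))
  set c := limUnder (𝓝[≠] l) g
  have hF : AnalyticAt ℂ (Function.update g l c) l := by
    apply Complex.analyticAt_of_differentiable_on_punctured_nhds_of_continuousAt
    · filter_upwards [hgd, self_mem_nhdsWithin] with z hz hzl
      refine hz.congr_of_eventuallyEq ?_
      filter_upwards [isOpen_ne.mem_nhds hzl] with w hw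
      exact Function.update_of_ne hw _ _
    · exact continuousAt_update_same.2 hlim
  obtain ⟨G, hG, hFG⟩ := exp1 hF
  obtain ⟨A, hA, hGA⟩ := exp1 hG
  have hev : ∀ z, z ≠ l → f z = c * (z - l)⁻¹ + G l + (z - l) * A z := by
    intro z hz
    have h1 := hFG z
    rw [Function.update_of_ne hz, Function.update_self, hGA z] at h1
    have : z - l ≠ 0 := sub_ne_zero.2 hz
    simp only [hg] at h1
    field_simp
    linear_combination h1
  refine ⟨c, G l, A, deriv A, hA.continuousAt, hA.deriv.continuousAt, ?_⟩
  filter_upwards [self_mem_nhdsWithin, hA.eventually_analyticAt.filter_mono nhdsWithin_le_nhds]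
    with z hz hAz
  have hz0 : z - l ≠ 0 := sub_ne_zero.2 hz
  refine ⟨hz0, hev z hz, ?_⟩
  have e : f =ᶠ[𝓝 z] fun z => c * (z - l)⁻¹ + G l + (z - l) * A z := by
    filter_upwards [isOpen_ne.mem_nhds hz] with w hw using hev w hw
  rw [e.deriv_eq]
  have h1 : HasDerivAt (fun z => z - l) 1 z := (hasDerivAt_id z).sub_const l
  have h2 := (((h1.inv hz0).const_mul c).add_const (G l)).add
    (h1.mul hAz.differentiableAt.hasDerivAt)
  refine (h2.deriv).trans ?_
  field_simp
  ring

/-- Laurent coefficients at a pole `l` with residue `1` of a local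
solution `(p, q)` of the Hamiltonian system:
`p(z) = (z−l)⁻¹ + l/2 + (1 + (α−2β)/3 − l²/4)(z−l) + ⋯` and
`q(z) = −(z−l)⁻¹ + l/2 + (1 + (2α−β)/3 + l²/4)(z−l) + ⋯`. -/
theorem stmt_4 (α β : ℂ) (D : Set ℂ) (hD : IsOpen D) (l : ℂ) (hl : l ∈ D) (p q : ℂ → ℂ)
    (hp : DifferentiableOn ℂ p (D \ {l})) (hq : DifferentiableOn ℂ q (D \ {l}))
    (hp' : ∀ z ∈ D \ {l}, deriv p z = -(q z) ^ 2 - z * p z - α)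
    (hq' : ∀ z ∈ D \ {l}, deriv q z = (p z) ^ 2 + z * q z + β)
    (hres : Tendsto (fun z => (z - l) * p z) (𝓝[≠] l) (𝓝 1)) :
    Tendsto (fun z => p z - (z - l)⁻¹) (𝓝[≠] l) (𝓝 (l / 2)) ∧
    Tendsto (fun z => q z + (z - l)⁻¹) (𝓝[≠] l) (𝓝 (l / 2)) ∧
    Tendsto (fun z => (p z - (z - l)⁻¹ - l / 2) / (z - l)) (𝓝[≠] l)
      (𝓝 (1 + (α - 2 * β) / 3 - l ^ 2 / 4)) ∧
    Tendsto (fun z => (q z + (z - l)⁻¹ - l / 2) / (z - l)) (𝓝[≠] l)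
      (𝓝 (1 + (2 * α - β) / 3 + l ^ 2 / 4)) := by
  have hmem : ∀ᶠ z in 𝓝[≠] l, z ∈ D \ {l} := by
    filter_upwards [self_mem_nhdsWithin, nhdsWithin_le_nhds (hD.mem_nhds hl)] with z h1 h2
    exact ⟨h2, h1⟩
  have hopen : IsOpen (D \ {l}) := hD.sdiff isClosed_singleton
  have lim : ∀ {f : ℂ → ℂ}, ContinuousAt f l → Tendsto f (𝓝[≠] l) (𝓝 (f l)) :=
    fun h => h.tendsto.mono_left nhdsWithin_le_nhds
  have ceq : ∀ {f : ℂ → ℂ} (k : ℂ), ContinuousAt f l → (∀ᶠ z in 𝓝[≠] l, f z = k) → f l = k := by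
    intro f k h1 h2
    exact tendsto_nhds_unique (lim h1) (tendsto_const_nhds.congr' (h2.mono fun z hz => hz.symm))
  obtain ⟨c, a, A, A', hA, hA', hpe⟩ := key (f := p) (l := l)
    (hmem.mono fun z hz => (hp z hz).differentiableAt (hopen.mem_nhds hz)) 2
    ((hres.norm.eventually_le_const (by norm_num)))
  have hc : c = 1 := by
    have h1 : Tendsto (fun z => c + (z - l) * a + (z - l) ^ 2 * A z) (𝓝[≠] l) (𝓝 c) := by
      have := lim (f := fun z => c + (z - l) * a + (z - l) ^ 2 * A z) (by fun_prop)
      simpa using this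
    refine tendsto_nhds_unique (h1.congr' ?_) hres
    filter_upwards [hpe] with z ⟨h0, h1, _⟩
    rw [h1]; field_simp
  subst hc
  have hq2 : Tendsto (fun z => ((z - l) * q z) ^ 2) (𝓝[≠] l) (𝓝 1) := by
    have := lim (f := fun z => 1 - (z - l) ^ 2 * (A z + (z - l) * A' z)
      - z * ((z - l) + (z - l) ^ 2 * a + (z - l) ^ 3 * A z) - α * (z - l) ^ 2) (by fun_prop)
    simp only [sub_self] at this
    norm_num at this
    refine this.congr' ?_
    filter_upwards [hpe, hmem] with z ⟨h0, h1, h2⟩ hz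
    have h3 := hp' z hz
    rw [h2, h1] at h3
    field_simp at h3
    linear_combination -h3
  obtain ⟨d, b, B, B', hB, hB', hqe⟩ := key (f := q) (l := l)
    (hmem.mono fun z hz => (hq z hz).differentiableAt (hopen.mem_nhds hz)) 2 (by
      filter_upwards [hq2.norm.eventually_le_const (u := 2) (by norm_num)] with z hz
      rw [norm_pow] at hz
      nlinarith [norm_nonneg ((z - l) * q z)])
  have hd : d = -1 := by
    have := ceq (f := fun z => -d + (z - l) ^ 2 * (B z + (z - l) * B' z)
      - (1 + (z - l) * a + (z - l) ^ 2 * A z) ^ 2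
      - z * (z - l) * (d + (z - l) * b + (z - l) ^ 2 * B z) - β * (z - l) ^ 2) 0 (by fun_prop) (by
        filter_upwards [hpe, hqe, hmem] with z ⟨h0, h1, h2⟩ ⟨_, h4, h5⟩ hz
        have h3 := hq' z hz
        rw [h5, h4, h1] at h3
        field_simp at h3
        linear_combination h3)
    simp at this
    linear_combination -this
  subst hd
  have E1 : ∀ᶠ z in 𝓝[≠] l, z - l ≠ 0 ∧ l - 2 * b + (z - l) * (A z + (z - l) * A' z + (b ^ 2 - 2 * B z)
      + 2 * (z - l) * b * B z + (z - l) ^ 2 * B z ^ 2 + l * (a + (z - l) * A z)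
      + 1 + (z - l) * a + (z - l) ^ 2 * A z + α) = 0 := by
    filter_upwards [hpe, hqe, hmem] with z ⟨h0, h1, h2⟩ ⟨_, h4, h5⟩ hz
    refine ⟨h0, ?_⟩
    have h3 := hp' z hz
    rw [h2, h4, h1] at h3
    field_simp at h3
    apply mul_left_cancel₀ h0
    linear_combination h3
  have E2 : ∀ᶠ z in 𝓝[≠] l, z - l ≠ 0 ∧ l - 2 * a + (z - l) * (B z + (z - l) * B' z - (a ^ 2 + 2 * A z)
      - 2 * (z - l) * a * A z - (z - l) ^ 2 * A z ^ 2 - l * (b + (z - l) * B z)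
      + 1 - (z - l) * b - (z - l) ^ 2 * B z - β) = 0 := by
    filter_upwards [hpe, hqe, hmem] with z ⟨h0, h1, h2⟩ ⟨_, h4, h5⟩ hz
    refine ⟨h0, ?_⟩
    have h3 := hq' z hz
    rw [h5, h4, h1] at h3
    field_simp at h3
    apply mul_left_cancel₀ h0
    linear_combination h3
  have hb : b = l / 2 := by
    have := ceq _ (by fun_prop) (E1.mono fun z hz => hz.2)
    simp at this
    linear_combination -this / 2
  have ha : a = l / 2 := by
    have := ceq _ (by fun_prop) (E2.mono fun z hz => hz.2)
    simp at this
    linear_combination -this / 2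
  subst hb
  subst ha
  have F1 := ceq (f := fun z => (A z + (z - l) * A' z + ((l / 2) ^ 2 - 2 * B z)
      + 2 * (z - l) * (l / 2) * B z + (z - l) ^ 2 * B z ^ 2 + l * ((l / 2) + (z - l) * A z)
      + 1 + (z - l) * (l / 2) + (z - l) ^ 2 * A z + α)) 0 (by fun_prop) (by
    filter_upwards [E1] with z ⟨h0, h1⟩
    apply mul_left_cancel₀ h0
    linear_combination h1)
  have F2 := ceq (f := fun z => (B z + (z - l) * B' z - ((l / 2) ^ 2 + 2 * A z)
      - 2 * (z - l) * (l / 2) * A z - (z - l) ^ 2 * A z ^ 2 - l * ((l / 2) + (z - l) * B z)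
      + 1 - (z - l) * (l / 2) - (z - l) ^ 2 * B z - β)) 0 (by fun_prop) (by
    filter_upwards [E2] with z ⟨h0, h1⟩
    apply mul_left_cancel₀ h0
    linear_combination h1)
  simp only [sub_self] at F1 F2
  have hAl : A l = 1 + (α - 2 * β) / 3 - l ^ 2 / 4 := by
    linear_combination -F1 / 3 - 2 * F2 / 3
  have hBl : B l = 1 + (2 * α - β) / 3 + l ^ 2 / 4 := by
    linear_combination -F2 / 3 - 2 * F1 / 3
  rw [← hAl, ← hBl]
  refine ⟨?_, ?_, ?_, ?_⟩
  · have := lim (f := fun z => l / 2 + (z - l) * A z) (by fun_prop)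
    simp only [sub_self, zero_mul, add_zero] at this
    refine this.congr' ?_
    filter_upwards [hpe] with z ⟨h0, h1, _⟩
    rw [h1]; ring
  · have := lim (f := fun z => l / 2 + (z - l) * B z) (by fun_prop)
    simp only [sub_self, zero_mul, add_zero] at this
    refine this.congr' ?_
    filter_upwards [hqe] with z ⟨h0, h1, _⟩
    rw [h1]; ring
  · refine (lim hA).congr' ?_
    filter_upwards [hpe] with z ⟨h0, h1, _⟩
    rw [h1, eq_div_iff h0]; ring
  · refine (lim hB).congr' ?_
    filter_upwards [hqe] with z ⟨h0, h1, _⟩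
    rw [h1, eq_div_iff h0]; ring
end

section
/- Let α, β ∈ ℂ, let D ⊆ ℂ be an open set containing λ, and let p, q be holomorphic on D ∖ {λ} and satisfy p′(z) = −q(z)² − z·p(z) − α and q′(z) = p(z)² + z·q(z) + β there. Suppose p has a simple pole at λ with residue 1. Then the function w(z) = p(z) + q(z) − z extends holomorphically across λ, and the extension satisfies w(λ) = 0 and w′(λ) = 1 + α − β. -/
open Topology Filter

lemma aux_eq (D : Set ℂ) (hD : IsOpen D) (l : ℂ) (hl : l ∈ D) (f g : ℂ → ℂ)
    (hf : ContinuousAt f l) (hg : ContinuousAt g l) (h : ∀ z ∈ D \ {l}, f z = g z) :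
    f l = g l := by
  have h1 : Tendsto f (𝓝[≠] l) (𝓝 (f l)) := hf.tendsto.mono_left nhdsWithin_le_nhds
  have h2 : Tendsto g (𝓝[≠] l) (𝓝 (g l)) := hg.tendsto.mono_left nhdsWithin_le_nhds
  have h3 : f =ᶠ[𝓝[≠] l] g := by
    filter_upwards [self_mem_nhdsWithin, nhdsWithin_le_nhds (hD.mem_nhds hl)] with z hz hz'
    exact h z ⟨hz', hz⟩
  exact tendsto_nhds_unique (h1.congr' h3) h2

lemma aux_ext (D : Set ℂ) (hD : IsOpen D) (l : ℂ) (hl : l ∈ D) (f : ℂ → ℂ) (M : ℝ)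
    (hf : DifferentiableOn ℂ f (D \ {l})) (hb : ∀ᶠ z in 𝓝[≠] l, ‖f z‖ ≤ M) :
    ∃ F : ℂ → ℂ, DifferentiableOn ℂ F D ∧ ∀ z, z ≠ l → F z = f z := by
  have hb' : ∀ᶠ z in 𝓝 l, z ≠ l → ‖f z‖ ≤ M := eventually_nhdsWithin_iff.1 hb
  obtain ⟨s, hs, hso, hls⟩ := eventually_nhds_iff.1 hb'
  have hU : D ∩ s ∈ 𝓝 l := (hD.inter hso).mem_nhds ⟨hl, hls⟩
  have h1 := Complex.differentiableOn_update_limUnder_of_bddAbove (f := f) hU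
    (hf.mono (by rintro z ⟨⟨a, b⟩, c⟩; exact ⟨a, c⟩))
    ⟨M, by rintro _ ⟨z, ⟨⟨a, b⟩, c⟩, rfl⟩; exact hs z b c⟩
  refine ⟨_, ?_, fun z hz => Function.update_of_ne hz (limUnder (𝓝[≠] l) f) f⟩
  intro z hz
  by_cases hzl : z = l
  · subst hzl
    exact (h1.differentiableAt hU).differentiableWithinAt
  · have : DifferentiableAt ℂ f z :=
      hf.differentiableAt ((hD.sdiff isClosed_singleton).mem_nhds ⟨hz, hzl⟩)
    refine (this.congr_of_eventuallyEq ?_).differentiableWithinAt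
    filter_upwards [isOpen_ne.mem_nhds hzl] with y hy
    exact Function.update_of_ne hy _ _

/-- If `p` has a simple pole at `l` with residue `1` for a local solution
`(p, q)` of the Hamiltonian system, then `w = p + q − z` extends holomorphically across `l`,
with `w(l) = 0` and `w′(l) = 1 + α − β`. -/
theorem stmt_5 (α β : ℂ) (D : Set ℂ) (hD : IsOpen D) (l : ℂ) (hl : l ∈ D) (p q : ℂ → ℂ)
    (hp : DifferentiableOn ℂ p (D \ {l})) (hq : DifferentiableOn ℂ q (D \ {l}))
    (hp' : ∀ z ∈ D \ {l}, deriv p z = -(q z) ^ 2 - z * p z - α)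
    (hq' : ∀ z ∈ D \ {l}, deriv q z = (p z) ^ 2 + z * q z + β)
    (hres : Tendsto (fun z => (z - l) * p z) (𝓝[≠] l) (𝓝 1)) :
    ∃ w : ℂ → ℂ, DifferentiableOn ℂ w D ∧
      (∀ z ∈ D \ {l}, w z = p z + q z - z) ∧
      w l = 0 ∧ deriv w l = 1 + α - β := by
  have hDl : IsOpen (D \ {l}) := hD.sdiff isClosed_singleton
  have hDn : D ∈ 𝓝 l := hD.mem_nhds hl
  have hev : ∀ᶠ z in 𝓝[≠] l, z ∈ D \ {l} := by
    filter_upwards [self_mem_nhdsWithin, nhdsWithin_le_nhds hDn] with z hz hz'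
    exact ⟨hz', hz⟩
  -- derivative of `t * f`
  have hder : ∀ (f F : ℂ → ℂ), DifferentiableOn ℂ f (D \ {l}) →
      (∀ z, z ≠ l → F z = (z - l) * f z) → ∀ z ∈ D \ {l},
      deriv F z = f z + (z - l) * deriv f z := by
    intro f F hf hF z hz
    have h1 : HasDerivAt f (deriv f z) z := (hf.differentiableAt (hDl.mem_nhds hz)).hasDerivAt
    have h2 : HasDerivAt (fun z => (z - l) * f z) (1 * f z + (z - l) * deriv f z) z :=
      ((hasDerivAt_id z).sub_const l).mul h1
    have h3 : F =ᶠ[𝓝 z] fun z => (z - l) * f z := by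
      filter_upwards [isOpen_ne.mem_nhds hz.2] with y hy using hF y hy
    rw [h3.deriv_eq, h2.deriv, one_mul]
  have hid : DifferentiableOn ℂ (fun z : ℂ => z - l) (D \ {l}) := by fun_prop
  obtain ⟨P, hPd, hP⟩ := aux_ext D hD l hl (fun z => (z - l) * p z) 2 (hid.mul hp) (by
    have := hres.norm.eventually_lt_const (u := 2) (by norm_num)
    exact this.mono fun z hz => hz.le)
  have hPc : ContinuousAt P l := (hPd.differentiableAt hDn).continuousAt
  have hP'c : ContinuousAt (deriv P) l := ((hPd.deriv hD).differentiableAt hDn).continuousAt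
  have hPl : P l = 1 := by
    refine tendsto_nhds_unique (hPc.tendsto.mono_left nhdsWithin_le_nhds) (hres.congr' ?_)
    filter_upwards [self_mem_nhdsWithin] with z hz using (hP z hz).symm
  have hP' := hder p P hp hP
  obtain ⟨Q, hQd, hQ⟩ := aux_ext D hD l hl (fun z => (z - l) * q z) 2 (hid.mul hq) (by
    have hc : ContinuousAt (fun z => P z - (z - l) * deriv P z - (z - l) * z * P z
        - α * (z - l) ^ 2) l := by fun_prop
    have h1 := (hc.tendsto.mono_left (nhdsWithin_le_nhds (s := {l}ᶜ))).norm.eventually_lt_const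
      (u := 4) (by simp [hPl])
    filter_upwards [h1, hev] with z hz hzD
    have e : P z - (z - l) * deriv P z - (z - l) * z * P z - α * (z - l) ^ 2
        = ((z - l) * q z) ^ 2 := by
      rw [hP' z hzD, hP z hzD.2, hp' z hzD]; ring
    rw [e, norm_pow] at hz
    nlinarith [norm_nonneg ((z - l) * q z)])
  have hQc : ContinuousAt Q l := (hQd.differentiableAt hDn).continuousAt
  have hQ'c : ContinuousAt (deriv Q) l := ((hQd.deriv hD).differentiableAt hDn).continuousAt
  have hQ' := hder q Q hq hQ
  have hQl : Q l = -1 := by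
    have := aux_eq D hD l hl (fun z => (z - l) * deriv Q z - Q z)
      (fun z => P z ^ 2 + z * (z - l) * Q z + β * (z - l) ^ 2) (by fun_prop) (by fun_prop) (by
        intro z hz
        rw [hQ' z hz, hP z hz.2, hQ z hz.2, hq' z hz]; ring)
    simp [hPl] at this
    linear_combination -this
  let w : ℂ → ℂ := fun z => dslope (P + Q) l z - z
  have hwd : DifferentiableOn ℂ w D :=
    ((Complex.differentiableOn_dslope hDn).2 (hPd.add hQd)).sub differentiableOn_id
  have hwe : ∀ z ∈ D \ {l}, w z = p z + q z - z := by
    intro z hz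
    have hne : z - l ≠ 0 := sub_ne_zero.2 hz.2
    simp only [w, dslope_of_ne _ hz.2, slope_def_field, Pi.add_apply, hPl, hQl, hP z hz.2,
      hQ z hz.2]
    field_simp
    ring
  have hw' : ∀ z ∈ D \ {l}, deriv w z = (p z - q z) * w z + (β - α - 1) := by
    intro z hz
    have h1 := (hp.differentiableAt (hDl.mem_nhds hz)).hasDerivAt
    have h2 := (hq.differentiableAt (hDl.mem_nhds hz)).hasDerivAt
    have h3 : w =ᶠ[𝓝 z] fun z => p z + q z - z := by
      filter_upwards [hDl.mem_nhds hz] with y hy using hwe y hy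
    have h4 : HasDerivAt (fun z => p z + q z - z) (deriv p z + deriv q z - 1) z :=
      (h1.add h2).sub (hasDerivAt_id z)
    rw [h3.deriv_eq, h4.deriv, hwe z hz, hp' z hz, hq' z hz]; ring
  have hwc : ContinuousAt w l := (hwd.differentiableAt hDn).continuousAt
  have hw'c : ContinuousAt (deriv w) l := ((hwd.deriv hD).differentiableAt hDn).continuousAt
  have hwl : w l = 0 := by
    have := aux_eq D hD l hl (fun z => (z - l) * deriv w z)
      (fun z => (P z - Q z) * w z + (β - α - 1) * (z - l)) (by fun_prop) (by fun_prop) (by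
        intro z hz
        rw [hw' z hz, hP z hz.2, hQ z hz.2]; ring)
    simp only [hPl, hQl, sub_self] at this
    linear_combination -this / 2
  refine ⟨w, hwd, hwe, hwl, ?_⟩
  have hvc : ContinuousAt (dslope w l) l :=
    (((Complex.differentiableOn_dslope hDn).2 hwd).differentiableAt hDn).continuousAt
  have := aux_eq D hD l hl (deriv w)
      (fun z => (P z - Q z) * dslope w l z + (β - α - 1)) hw'c (by fun_prop) (by
        intro z hz
        have hne : z - l ≠ 0 := sub_ne_zero.2 hz.2
        simp only [dslope_of_ne _ hz.2, slope_def_field, hwl]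
        rw [hw' z hz, hP z hz.2, hQ z hz.2]
        field_simp
        ring)
  simp only [hPl, hQl, dslope_same] at this
  linear_combination -this
end

section
/- Let α, β ∈ ℂ, let ω ∈ ℂ satisfy ω³ = 1, let U ⊆ ℂ be open, and let p, q be holomorphic on U and satisfy p′(z) = −q(z)² − z·p(z) − α and q′(z) = p(z)² + z·q(z) + β on U. Suppose the function f(z) = ω·p(z) + ω²·q(z) − z has no zeros in U. Then the functions p̃(z) = p(z) − ω²·(ωα − ω²β + 1)/f(z) and q̃(z) = q(z) + ω·(ωα − ω²β + 1)/f(z) are holomorphic on U and satisfy the Hamiltonian system with parameters (ωβ − ω², ω²α + ω), i.e. p̃′(z) = −q̃(z)² − z·p̃(z) − (ωβ − ω²) and q̃′(z) = p̃(z)² + z·q̃(z) + (ω²α + ω) on U. -/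
/-- The Bäcklund transformation `B_ω`: if `(p, q)` solves the Hamiltonian
system with parameters `(α, β)` on an open set `U` where `f = ω·p + ω²·q − z` has no zeros,
then `p̃ = p − ω²·(ωα − ω²β + 1)/f` and `q̃ = q + ω·(ωα − ω²β + 1)/f` solve the system with
parameters `(ωβ − ω², ω²α + ω)` on `U`. -/
theorem stmt_6 (α β ω : ℂ) (hω : ω ^ 3 = 1) (U : Set ℂ) (hU : IsOpen U) (p q : ℂ → ℂ)
    (hp : DifferentiableOn ℂ p U) (hq : DifferentiableOn ℂ q U)
    (hp' : ∀ z ∈ U, deriv p z = -(q z) ^ 2 - z * p z - α)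
    (hq' : ∀ z ∈ U, deriv q z = (p z) ^ 2 + z * q z + β)
    (hf : ∀ z ∈ U, ω * p z + ω ^ 2 * q z - z ≠ 0) :
    DifferentiableOn ℂ
        (fun z => p z - ω ^ 2 * (ω * α - ω ^ 2 * β + 1) / (ω * p z + ω ^ 2 * q z - z)) U ∧
    DifferentiableOn ℂ
        (fun z => q z + ω * (ω * α - ω ^ 2 * β + 1) / (ω * p z + ω ^ 2 * q z - z)) U ∧
    (∀ z ∈ U,
      deriv (fun w => p w - ω ^ 2 * (ω * α - ω ^ 2 * β + 1) / (ω * p w + ω ^ 2 * q w - w)) z =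
        -(q z + ω * (ω * α - ω ^ 2 * β + 1) / (ω * p z + ω ^ 2 * q z - z)) ^ 2
          - z * (p z - ω ^ 2 * (ω * α - ω ^ 2 * β + 1) / (ω * p z + ω ^ 2 * q z - z))
          - (ω * β - ω ^ 2)) ∧
    (∀ z ∈ U,
      deriv (fun w => q w + ω * (ω * α - ω ^ 2 * β + 1) / (ω * p w + ω ^ 2 * q w - w)) z =
        (p z - ω ^ 2 * (ω * α - ω ^ 2 * β + 1) / (ω * p z + ω ^ 2 * q z - z)) ^ 2
          + z * (q z + ω * (ω * α - ω ^ 2 * β + 1) / (ω * p z + ω ^ 2 * q z - z))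
          + (ω ^ 2 * α + ω)) := by
  have hP : ∀ z ∈ U, HasDerivAt p (-(q z) ^ 2 - z * p z - α) z := fun z hz => by
    rw [← hp' z hz]
    exact (hp.differentiableAt (hU.mem_nhds hz)).hasDerivAt
  have hQ : ∀ z ∈ U, HasDerivAt q ((p z) ^ 2 + z * q z + β) z := fun z hz => by
    rw [← hq' z hz]
    exact (hq.differentiableAt (hU.mem_nhds hz)).hasDerivAt
  have hF : ∀ z ∈ U, HasDerivAt (fun w => ω * p w + ω ^ 2 * q w - w)
      ((ω * p z - ω ^ 2 * q z) * (ω * p z + ω ^ 2 * q z - z)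
        - (ω * α - ω ^ 2 * β + 1)) z := fun z hz => by
    refine ((((hP z hz).const_mul ω).add ((hQ z hz).const_mul (ω ^ 2))).sub
      (hasDerivAt_id z)).congr_deriv ?_
    linear_combination (ω * q z ^ 2) * hω
  have hC : ∀ c : ℂ, ∀ z ∈ U, HasDerivAt (fun w => c / (ω * p w + ω ^ 2 * q w - w))
      (-c * ((ω * p z - ω ^ 2 * q z) * (ω * p z + ω ^ 2 * q z - z)
        - (ω * α - ω ^ 2 * β + 1)) / (ω * p z + ω ^ 2 * q z - z) ^ 2) z := fun c z hz => by
    refine ((hasDerivAt_const z c).div (hF z hz) (hf z hz)).congr_deriv ?_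
    ring
  have h1 := fun z hz => (hP z hz).sub (hC (ω ^ 2 * (ω * α - ω ^ 2 * β + 1)) z hz)
  have h2 := fun z hz => (hQ z hz).add (hC (ω * (ω * α - ω ^ 2 * β + 1)) z hz)
  refine ⟨fun z hz => (h1 z hz).differentiableAt.differentiableWithinAt,
    fun z hz => (h2 z hz).differentiableAt.differentiableWithinAt,
    fun z hz => (h1 z hz).deriv.trans ?_, fun z hz => (h2 z hz).deriv.trans ?_⟩
  · have h0 := hf z hz
    generalize hfe : ω * p z + ω ^ 2 * q z - z = f at *
    have hz' : z = ω * p z + ω ^ 2 * q z - f := by rw [← hfe]; ring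
    generalize p z = a at *
    generalize q z = b at *
    subst hz'
    field_simp
    grind
  · have h0 := hf z hz
    generalize hfe : ω * p z + ω ^ 2 * q z - z = f at *
    have hz' : z = ω * p z + ω ^ 2 * q z - f := by rw [← hfe]; ring
    generalize p z = a at *
    generalize q z = b at *
    subst hz'
    field_simp
    grind
end

section
/- Let α, β ∈ ℂ and let (p, q) be a pair of functions meromorphic on all of ℂ satisfying p′(z) = −q(z)² − z·p(z) − α and q′(z) = p(z)² + z·q(z) + β at every point where both are holomorphic. Then p and q have order of growth at most four: there is a constant C such that T(r, p) + T(r, q) ≤ C·r⁴ for all r ≥ 1, where T denotes the Nevanlinna characteristic. -/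
open Filter Topology Asymptotics

/-- The positive part of the logarithm, `log⁺ x = max 0 (log x)`. -/
noncomputable def logPlus (x : ℝ) : ℝ := max 0 (Real.log x)

/-- The Nevanlinna proximity function
`m(r, f) = (2π)⁻¹ ∫₀^{2π} log⁺ |f(r e^{iθ})| dθ`. -/
noncomputable def proximity (f : ℂ → ℂ) (r : ℝ) : ℝ :=
  (2 * Real.pi)⁻¹ * ∫ θ in (0:ℝ)..(2 * Real.pi),
    logPlus ‖f ((r : ℂ) * Complex.exp ((θ : ℂ) * Complex.I))‖

/-- The multiplicity of `z₀` as a pole of `f`: the least `k` such that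
`(z − z₀)^k · f(z)` has a finite limit at `z₀` (and `0` if there is no such `k`). -/
noncomputable def poleMult (f : ℂ → ℂ) (z₀ : ℂ) : ℕ :=
  sInf {k : ℕ | ∃ c : ℂ, Tendsto (fun z => (z - z₀) ^ k * f z) (𝓝[≠] z₀) (𝓝 c)}

/-- The unintegrated counting function of poles,
`n(t, f) = Σ_{|z| ≤ t} (multiplicity of z as pole of f)`. -/
noncomputable def nPoles (f : ℂ → ℂ) (t : ℝ) : ℝ :=
  ∑ᶠ z ∈ Metric.closedBall (0 : ℂ) t, (poleMult f z : ℝ)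

/-- The integrated counting function of poles,
`N(r, f) = ∫₀^r (n(t,f) − n(0,f))/t dt + n(0,f) log r`. -/
noncomputable def countingN (f : ℂ → ℂ) (r : ℝ) : ℝ :=
  (∫ t in (0:ℝ)..r, (nPoles f t - nPoles f 0) / t) + nPoles f 0 * Real.log r

/-- The Nevanlinna characteristic `T(r, f) = m(r, f) + N(r, f)`. -/
noncomputable def nevT (f : ℂ → ℂ) (r : ℝ) : ℝ := proximity f r + countingN f r

/-- `(p, q)` is a (meromorphic) solution on `ℂ` of the Hamiltonian system
`p′ = −q² − z·p − α`, `q′ = p² + z·q + β`. -/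
def IsHamSolution (α β : ℂ) (p q : ℂ → ℂ) : Prop :=
  MeromorphicOn p Set.univ ∧ MeromorphicOn q Set.univ ∧
    ∀ z : ℂ, AnalyticAt ℂ p z → AnalyticAt ℂ q z →
      deriv p z = -(q z) ^ 2 - z * p z - α ∧ deriv q z = (p z) ^ 2 + z * q z + β

/-- A function is rational if it agrees with a quotient of polynomials away from
finitely many points. -/
def IsRationalFn (f : ℂ → ℂ) : Prop :=
  ∃ P Q : Polynomial ℂ, Q ≠ 0 ∧ ∀ᶠ z in Filter.cofinite, f z = P.eval z / Q.eval z

/-- `z₀` is a pole of `f`: `|f| → ∞` at `z₀`. -/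
def IsPole (f : ℂ → ℂ) (z₀ : ℂ) : Prop :=
  Tendsto (fun z => ‖f z‖) (𝓝[≠] z₀) atTop

/-- `f` has residue `ρ` at a simple pole `z₀`: `(z − z₀)·f(z) → ρ` at `z₀`. -/
def HasResidue (f : ℂ → ℂ) (z₀ ρ : ℂ) : Prop :=
  Tendsto (fun z => (z - z₀) * f z) (𝓝[≠] z₀) (𝓝 ρ)

/-- `n(r, S)`: the number of points of `S` in the closed disc of radius `r`. -/
noncomputable def setCount (S : Set ℂ) (r : ℝ) : ℝ :=
  ((S ∩ Metric.closedBall (0 : ℂ) r).ncard : ℝ)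

/-- The closed sector `{t·e^{iθ} : t > 0, a ≤ θ ≤ b}`. -/
def ClosedSector (a b : ℝ) : Set ℂ :=
  {z | ∃ t θ : ℝ, 0 < t ∧ a ≤ θ ∧ θ ≤ b ∧ z = (t : ℂ) * Complex.exp ((θ : ℂ) * Complex.I)}

local notation "cj" => (starRingEnd ℂ)


lemma ham_a1 (p q : ℂ) : ‖p^2 * cj q + q^2 * cj p‖^2
    = ‖p^3+q^3‖^2 - (‖p‖^2-‖q‖^2)^2*(‖p‖^2+‖q‖^2) := by
  simp only [Complex.sq_norm, Complex.normSq_apply]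
  simp [pow_succ]
  ring

lemma ham_B (p q : ℂ) : ‖p^2 * cj q + q^2 * cj p‖ ≤ ‖p^3+q^3‖ := by
  have h := ham_a1 p q
  have : 0 ≤ (‖p‖^2-‖q‖^2)^2*(‖p‖^2+‖q‖^2) := by positivity
  exact le_of_sq_le_sq (by linarith) (norm_nonneg _)

lemma ham_B' (p q : ℂ) : ‖p * (cj q)^2 + q * (cj p)^2‖ ≤ ‖p^3+q^3‖ := by
  have h := ham_B p q
  have e : p * (cj q)^2 + q * (cj p)^2 = cj (p^2 * cj q + q^2 * cj p) := by
    simp; ring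
  rw [e, RCLike.norm_conj]; exact h

lemma ham_D (p q : ℂ) : (‖p‖^2-‖q‖^2)^2*(‖p‖^2+‖q‖^2) ≤ ‖p^3+q^3‖^2 := by
  have h := ham_a1 p q
  nlinarith [sq_nonneg ‖p^2 * cj q + q^2 * cj p‖]

lemma ham_A1 (p q : ℂ) : ‖p^2 * cj q - q^2 * cj p‖ ≤ ‖p‖^2*‖q‖ + ‖q‖^2*‖p‖ := by
  refine (norm_sub_le _ _).trans ?_
  simp

lemma ham_A2 (p q : ℂ) : ‖p^2 * cj q - q^2 * cj p‖^2 ≤ (‖p‖^2+‖q‖^2)^3 := by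
  have h := ham_A1 p q
  have hp := norm_nonneg p
  have hq := norm_nonneg q
  have := pow_le_pow_left₀ (norm_nonneg _) h 2
  refine this.trans ?_
  have h2 : (‖p‖^2*‖q‖ + ‖q‖^2*‖p‖)^2 = (‖p‖^2*‖q‖^2)*(‖p‖+‖q‖)^2 := by ring
  rw [h2]
  have h3 : (‖p‖+‖q‖)^2 ≤ 2*(‖p‖^2+‖q‖^2) := by nlinarith [sq_nonneg (‖p‖-‖q‖)]
  have h4 : 2*(‖p‖^2*‖q‖^2) ≤ (‖p‖^2+‖q‖^2)^2 := by nlinarith [sq_nonneg (‖p‖^2), sq_nonneg (‖q‖^2)]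
  calc (‖p‖^2*‖q‖^2)*(‖p‖+‖q‖)^2 ≤ (‖p‖^2*‖q‖^2)*(2*(‖p‖^2+‖q‖^2)) := by gcongr
    _ = (2*(‖p‖^2*‖q‖^2))*(‖p‖^2+‖q‖^2) := by ring
    _ ≤ (‖p‖^2+‖q‖^2)^2*(‖p‖^2+‖q‖^2) := by gcongr
    _ = _ := by ring

lemma ham_AD (p q : ℂ) : ‖(p^2 * cj q - q^2 * cj p) * (p * cj p - q * cj q)‖
    ≤ (‖p‖^2+‖q‖^2) * ‖p^3+q^3‖ := by
  have e : p * cj p - q * cj q = ((‖p‖^2-‖q‖^2 : ℝ) : ℂ) := by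
    rw [Complex.mul_conj, Complex.mul_conj, Complex.normSq_eq_norm_sq, Complex.normSq_eq_norm_sq]
    push_cast; ring
  rw [norm_mul, e, Complex.norm_real, Real.norm_eq_abs]
  have hA := ham_A2 p q
  have hD := ham_D p q
  apply le_of_sq_le_sq _ (by positivity)
  rw [mul_pow, sq_abs]
  calc _ ≤ (‖p‖^2+‖q‖^2)^3 * (‖p‖^2-‖q‖^2)^2 := by gcongr
    _ = (‖p‖^2+‖q‖^2)^2 * ((‖p‖^2-‖q‖^2)^2*(‖p‖^2+‖q‖^2)) := by ring
    _ ≤ (‖p‖^2+‖q‖^2)^2 * ‖p^3+q^3‖^2 := by gcongr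
    _ = _ := by ring

/-- N = |p|^2+|q|^2+1 -/
noncomputable def hamN (p q : ℂ) : ℝ := ‖p‖^2+‖q‖^2+1

lemma hamN_pos (p q : ℂ) : 1 ≤ hamN p q := by unfold hamN; nlinarith [sq_nonneg ‖p‖, sq_nonneg ‖q‖]

lemma hamN_cast (p q : ℂ) : (hamN p q : ℂ) = p * cj p + q * cj q + 1 := by
  rw [Complex.mul_conj, Complex.mul_conj, Complex.normSq_eq_norm_sq, Complex.normSq_eq_norm_sq, hamN]
  push_cast; ring

lemma ham_p_le (p q : ℂ) : ‖p‖ ≤ √(hamN p q) := by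
  apply Real.le_sqrt_of_sq_le; unfold hamN; nlinarith [sq_nonneg ‖q‖]
lemma ham_q_le (p q : ℂ) : ‖q‖ ≤ √(hamN p q) := by
  apply Real.le_sqrt_of_sq_le; unfold hamN; nlinarith [sq_nonneg ‖p‖]

lemma ham_A_le (p q : ℂ) : ‖p^2 * cj q - q^2 * cj p‖ ≤ √(hamN p q)^3 := by
  have h := ham_A2 p q
  apply le_of_sq_le_sq _ (by positivity)
  have e : (√(hamN p q)^3)^2 = (hamN p q)^3 := by
    rw [← pow_mul, mul_comm, pow_mul, Real.sq_sqrt (by linarith [hamN_pos p q])]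
  rw [e]
  refine h.trans ?_
  exact pow_le_pow_left₀ (by positivity) (by unfold hamN; linarith) 3

lemma ham_S_le (p q : ℂ) : ‖p^3+q^3‖ ≤ √(hamN p q)^3 := by
  have h : ‖p^3+q^3‖ ≤ ‖p‖^3+‖q‖^3 := by
    refine (norm_add_le _ _).trans ?_; simp
  refine h.trans ?_
  have h1 := ham_p_le p q
  have h2 := ham_q_le p q
  have h3 : √(hamN p q)^2 = hamN p q := Real.sq_sqrt (by linarith [hamN_pos p q])
  set m := √(hamN p q)
  have hm : 0 ≤ m := Real.sqrt_nonneg _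
  have e : m^3 = m*(‖p‖^2+‖q‖^2+1) := by rw [← hamN, ← h3]; ring
  rw [e]
  nlinarith [mul_le_mul_of_nonneg_right h1 (sq_nonneg ‖p‖), mul_le_mul_of_nonneg_right h2 (sq_nonneg ‖q‖)]

/-- holomorphic part of derivative -/
noncomputable def hamX (p q p' q' : ℂ) : ℂ :=
  p*q + (2*p*p'*cj q - 2*q*q'*cj p) / (hamN p q)
   - (p^2 * cj q - q^2 * cj p) / (hamN p q)^2 * (p' * cj p + q' * cj q)
noncomputable def hamY (p q p' q' : ℂ) : ℂ :=
  (p^2*cj q' - q^2*cj p') / (hamN p q)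
   - (p^2 * cj q - q^2 * cj p) / (hamN p q)^2 * (p * cj p' + q * cj q')

lemma hamX_eq (α β z p q p' q' : ℂ) (hp : p' = -q^2 - z*p - α) (hq : q' = p^2+z*q+β) :
    (hamN p q : ℂ)^2 * hamX p q p' q' =
     p*q - (p^3+q^3)*(p*(cj q)^2+q*(cj p)^2)
     + z * (-2*((p^2 * cj q + q^2 * cj p)*hamN p q)
       + (p^2 * cj q - q^2 * cj p) * (p * cj p - q * cj q))
     + (-2*α*(p*cj q) - 2*β*(q*cj p))*hamN p q
     + (p^2 * cj q - q^2 * cj p)*(α*cj p - β*cj q) := by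
  have hN : (hamN p q : ℂ) ≠ 0 := by
    have := hamN_pos p q
    exact_mod_cast (by linarith : hamN p q ≠ 0)
  have e : (hamN p q : ℂ)^2 * hamX p q p' q' = p*q*(hamN p q:ℂ)^2
     + (2*p*p'*cj q - 2*q*q'*cj p) * (hamN p q)
     - (p^2 * cj q - q^2 * cj p) * (p' * cj p + q' * cj q) := by
    unfold hamX; field_simp
  rw [e, hamN_cast, hp, hq]
  ring

lemma hamY_eq (α β z p q p' q' : ℂ) (hp : p' = -q^2 - z*p - α) (hq : q' = p^2+z*q+β) :
    (hamN p q : ℂ)^2 * hamY p q p' q' =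
     (p^3+q^3) * cj (p^3+q^3) + (p*cj p)^2+(q*cj q)^2
     + cj z * ((p^2 * cj q + q^2 * cj p)*hamN p q
       + (p^2 * cj q - q^2 * cj p) * (p * cj p - q * cj q))
     + (cj β * p^2 + cj α * q^2) * hamN p q
     + (p^2 * cj q - q^2 * cj p)*(cj α * p - cj β * q) := by
  have hN : (hamN p q : ℂ) ≠ 0 := by
    have := hamN_pos p q
    exact_mod_cast (by linarith : hamN p q ≠ 0)
  have e : (hamN p q : ℂ)^2 * hamY p q p' q' =
      (p^2*cj q' - q^2*cj p') * (hamN p q)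
     - (p^2 * cj q - q^2 * cj p) * (p * cj p' + q * cj q') := by
    unfold hamY; field_simp
  rw [e, hamN_cast, hp, hq]
  simp only [map_add, map_sub, map_neg, map_mul, map_pow]
  ring

lemma hamX_le (α β z p q p' q' : ℂ) (hp : p' = -q^2 - z*p - α) (hq : q' = p^2+z*q+β) :
    ‖hamX p q p' q'‖ ≤ (‖p^3+q^3‖/hamN p q)^2 + 3*‖z‖*(‖p^3+q^3‖/hamN p q)
      + 1 + 2*(‖α‖+‖β‖) := by
  have h := congrArg norm (hamX_eq α β z p q p' q' hp hq)
  have hN1 := hamN_pos p q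
  have hN0 : 0 < hamN p q := by linarith
  have hxy : ‖p‖*‖q‖ ≤ hamN p q / 2 := by unfold hamN; nlinarith [sq_nonneg (‖p‖-‖q‖)]
  have hn : ‖p‖^2+‖q‖^2 ≤ hamN p q := by unfold hamN; linarith
  have hpm := ham_p_le p q
  have hqm := ham_q_le p q
  have hA := ham_A_le p q
  have hB := ham_B p q
  have hB' := ham_B' p q
  have hAD := ham_AD p q
  have h3 : √(hamN p q)^2 = hamN p q := Real.sq_sqrt hN0.le
  rw [norm_mul, norm_pow, Complex.norm_real, Real.norm_of_nonneg hN0.le] at h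
  set N := hamN p q with hNdef
  set m := √N
  have hm : 0 ≤ m := Real.sqrt_nonneg _
  set S := ‖p^3+q^3‖ with hS
  have hS0 : 0 ≤ S := norm_nonneg _
  have t1 : ‖p*q‖ ≤ N^2 := by rw [norm_mul]; nlinarith
  have t2 : ‖(p^3+q^3)*(p*(cj q)^2+q*(cj p)^2)‖ ≤ S^2 := by
    rw [norm_mul, sq S]; exact mul_le_mul_of_nonneg_left hB' hS0
  have t3 : ‖z * (-2*((p^2 * cj q + q^2 * cj p)*N)
       + (p^2 * cj q - q^2 * cj p) * (p * cj p - q * cj q))‖ ≤ ‖z‖ * (3*S*N) := by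
    rw [norm_mul]
    gcongr
    refine (norm_add_le _ _).trans ?_
    have : ‖-2*((p^2 * cj q + q^2 * cj p)*N)‖ ≤ 2*(S*N) := by
      rw [norm_mul, norm_mul, Complex.norm_real, Real.norm_of_nonneg hN0.le]
      simp only [norm_neg, Complex.norm_ofNat]
      gcongr
    nlinarith
  have t4 : ‖(-2*α*(p*cj q) - 2*β*(q*cj p))*N‖ ≤ (‖α‖+‖β‖)*N^2 := by
    rw [norm_mul, Complex.norm_real, Real.norm_of_nonneg hN0.le]
    have : ‖-2*α*(p*cj q) - 2*β*(q*cj p)‖ ≤ 2*‖α‖*(‖p‖*‖q‖) + 2*‖β‖*(‖p‖*‖q‖) := by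
      refine (norm_sub_le _ _).trans ?_
      simp [mul_comm ‖q‖ ‖p‖]
    calc _ ≤ (2*‖α‖*(‖p‖*‖q‖) + 2*‖β‖*(‖p‖*‖q‖))*N := by gcongr
      _ ≤ (2*‖α‖*(N/2) + 2*‖β‖*(N/2))*N := by gcongr
      _ = _ := by ring
  have t5 : ‖(p^2 * cj q - q^2 * cj p)*(α*cj p - β*cj q)‖ ≤ (‖α‖+‖β‖)*N^2 := by
    rw [norm_mul]
    have : ‖α*cj p - β*cj q‖ ≤ ‖α‖*m+‖β‖*m := by
      refine (norm_sub_le _ _).trans ?_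
      simp only [norm_mul, RCLike.norm_conj]
      gcongr
    calc _ ≤ m^3*(‖α‖*m+‖β‖*m) := by gcongr
      _ = _ := by rw [← h3]; ring
  have key : N^2*‖hamX p q p' q'‖ ≤ S^2 + ‖z‖*(3*S*N) + N^2 + 2*(‖α‖+‖β‖)*N^2 := by
    rw [h]
    refine (norm_add_le _ _).trans ?_
    have := (norm_add_le _ _).trans (add_le_add (norm_add_le (p*q - (p^3+q^3)*(p*(cj q)^2+q*(cj p)^2)) (z * (-2*((p^2 * cj q + q^2 * cj p)*N)
       + (p^2 * cj q - q^2 * cj p) * (p * cj p - q * cj q)))) (le_refl ‖(-2*α*(p*cj q) - 2*β*(q*cj p))*N‖))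
    have := norm_sub_le (p*q) ((p^3+q^3)*(p*(cj q)^2+q*(cj p)^2))
    linarith
  have e : (S/N)^2 + 3*‖z‖*(S/N) + 1 + 2*(‖α‖+‖β‖)
    = (S^2 + ‖z‖*(3*S*N) + N^2 + 2*(‖α‖+‖β‖)*N^2)/N^2 := by field_simp
  rw [e, le_div_iff₀ (by positivity)]
  linarith

lemma hamY_le (α β z p q p' q' : ℂ) (hp : p' = -q^2 - z*p - α) (hq : q' = p^2+z*q+β) :
    ‖hamY p q p' q'‖ ≤ (‖p^3+q^3‖/hamN p q)^2 + 2*‖z‖*(‖p^3+q^3‖/hamN p q)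
      + 1 + 2*(‖α‖+‖β‖) := by
  have h := congrArg norm (hamY_eq α β z p q p' q' hp hq)
  have hN1 := hamN_pos p q
  have hN0 : 0 < hamN p q := by linarith
  have hn : ‖p‖^2+‖q‖^2 ≤ hamN p q := by unfold hamN; linarith
  have hpm := ham_p_le p q
  have hqm := ham_q_le p q
  have hA := ham_A_le p q
  have hB := ham_B p q
  have hAD := ham_AD p q
  have h3 : √(hamN p q)^2 = hamN p q := Real.sq_sqrt hN0.le
  rw [norm_mul, norm_pow, Complex.norm_real, Real.norm_of_nonneg hN0.le] at h
  set N := hamN p q with hNdef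
  set m := √N
  have hm : 0 ≤ m := Real.sqrt_nonneg _
  set S := ‖p^3+q^3‖ with hS
  have hS0 : 0 ≤ S := norm_nonneg _
  have t1 : ‖(p*cj p)^2‖ + ‖(q*cj q)^2‖ ≤ N^2 := by
    simp only [norm_pow, norm_mul, RCLike.norm_conj]
    nlinarith [sq_nonneg ‖p‖, sq_nonneg ‖q‖, mul_nonneg (sq_nonneg ‖p‖) (sq_nonneg ‖q‖)]
  have t2 : ‖(p^3+q^3)*cj (p^3+q^3)‖ ≤ S^2 := by
    rw [norm_mul, sq, RCLike.norm_conj]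
  have t3 : ‖cj z * ((p^2 * cj q + q^2 * cj p)*N
       + (p^2 * cj q - q^2 * cj p) * (p * cj p - q * cj q))‖ ≤ ‖z‖ * (2*S*N) := by
    rw [norm_mul, RCLike.norm_conj]
    gcongr
    refine (norm_add_le _ _).trans ?_
    have : ‖((p^2 * cj q + q^2 * cj p)*N)‖ ≤ (S*N) := by
      rw [norm_mul, Complex.norm_real, Real.norm_of_nonneg hN0.le]
      gcongr
    nlinarith
  have t4 : ‖(cj β * p^2 + cj α * q^2)*N‖ ≤ (‖α‖+‖β‖)*N^2 := by
    rw [norm_mul, Complex.norm_real, Real.norm_of_nonneg hN0.le]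
    have : ‖cj β * p^2 + cj α * q^2‖ ≤ ‖β‖*m^2 + ‖α‖*m^2 := by
      refine (norm_add_le _ _).trans ?_
      simp only [norm_mul, norm_pow, RCLike.norm_conj]
      gcongr
    rw [h3] at this
    calc _ ≤ (‖β‖*N + ‖α‖*N)*N := by gcongr
      _ = _ := by ring
  have t5 : ‖(p^2 * cj q - q^2 * cj p)*(cj α * p - cj β * q)‖ ≤ (‖α‖+‖β‖)*N^2 := by
    rw [norm_mul]
    have : ‖cj α * p - cj β * q‖ ≤ ‖α‖*m+‖β‖*m := by
      refine (norm_sub_le _ _).trans ?_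
      simp only [norm_mul, RCLike.norm_conj]
      gcongr
    calc _ ≤ m^3*(‖α‖*m+‖β‖*m) := by gcongr
      _ = _ := by rw [← h3]; ring
  have key : N^2*‖hamY p q p' q'‖ ≤ S^2 + ‖z‖*(2*S*N) + N^2 + 2*(‖α‖+‖β‖)*N^2 := by
    rw [h]
    refine (norm_add_le _ _).trans ?_
    have := (norm_add_le _ _).trans (add_le_add (norm_add_le ((p^3+q^3) * cj (p^3+q^3) + (p*cj p)^2+(q*cj q)^2) (cj z * ((p^2 * cj q + q^2 * cj p)*N
       + (p^2 * cj q - q^2 * cj p) * (p * cj p - q * cj q)))) (le_refl ‖(cj β * p^2 + cj α * q^2)*N‖))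
    have := (norm_add_le _ _).trans (add_le_add (norm_add_le ((p^3+q^3) * cj (p^3+q^3)) ((p*cj p)^2)) (le_refl ‖(q*cj q)^2‖))
    linarith
  have e : (S/N)^2 + 2*‖z‖*(S/N) + 1 + 2*(‖α‖+‖β‖)
    = (S^2 + ‖z‖*(2*S*N) + N^2 + 2*(‖α‖+‖β‖)*N^2)/N^2 := by field_simp
  rw [e, le_div_iff₀ (by positivity)]
  linarith

/-- corrected Hamiltonian -/
noncomputable def hamPhi (α β z p q : ℂ) : ℂ :=
  (p^3+q^3)/3 + z*p*q + α*q + β*p + (p^2 * cj q - q^2 * cj p) / (hamN p q)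

lemma ham_sigma1 (p q : ℂ) : ‖p^3+q^3‖/hamN p q ≤ √(hamN p q) := by
  have hN0 : 0 < hamN p q := by linarith [hamN_pos p q]
  rw [div_le_iff₀ hN0]
  refine (ham_S_le p q).trans (le_of_eq ?_)
  nth_rewrite 3 [← Real.sq_sqrt hN0.le]
  ring

lemma ham_sigma2 (α β z p q : ℂ) : ‖p^3+q^3‖/hamN p q ≤
    3*‖hamPhi α β z p q‖/hamN p q + 2*‖z‖ + 3 + 3*(‖α‖+‖β‖) := by
  have hN1 := hamN_pos p q
  have hN0 : 0 < hamN p q := by linarith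
  have hxy : ‖p‖*‖q‖ ≤ hamN p q / 2 := by unfold hamN; nlinarith [sq_nonneg (‖p‖-‖q‖)]
  have hpm := ham_p_le p q
  have hqm := ham_q_le p q
  have hA := ham_A_le p q
  have h3 : √(hamN p q)^2 = hamN p q := Real.sq_sqrt hN0.le
  have hmN : √(hamN p q) ≤ hamN p q := by
    rw [Real.sqrt_le_left (by linarith)]; nlinarith
  have e : p^3+q^3 = 3*hamPhi α β z p q - 3*(z*(p*q)) - 3*(α*q) - 3*(β*p) - 3*((p^2 * cj q - q^2 * cj p) / (hamN p q)) := by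
    unfold hamPhi; ring
  have hAN : ‖(p^2 * cj q - q^2 * cj p) / (hamN p q : ℂ)‖ ≤ √(hamN p q) := by
    rw [norm_div, Complex.norm_real, Real.norm_of_nonneg hN0.le, div_le_iff₀ hN0]
    refine hA.trans (le_of_eq ?_)
    nth_rewrite 3 [← h3]
    ring
  have hS : ‖p^3+q^3‖ ≤ 3*‖hamPhi α β z p q‖ + 3*(‖z‖*(‖p‖*‖q‖)) + 3*(‖α‖*‖q‖) + 3*(‖β‖*‖p‖) + 3*‖(p^2 * cj q - q^2 * cj p) / (hamN p q : ℂ)‖ := by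
    conv_lhs => rw [e]
    refine (norm_sub_le _ _).trans ?_
    refine (add_le_add ((norm_sub_le _ _).trans (add_le_add ((norm_sub_le _ _).trans (add_le_add (norm_sub_le _ _) le_rfl)) le_rfl)) le_rfl).trans ?_
    simp only [norm_mul, Complex.norm_ofNat]
    exact le_rfl
  set N := hamN p q with hNdef
  set m := √N
  have e2 : 3*‖hamPhi α β z p q‖/N + 2*‖z‖ + 3 + 3*(‖α‖+‖β‖)
     = (3*‖hamPhi α β z p q‖ + 2*‖z‖*N + 3*N + 3*(‖α‖+‖β‖)*N)/N := by field_simp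
  rw [e2]
  gcongr
  have u1 : 3*(‖z‖*(‖p‖*‖q‖)) ≤ 3*(‖z‖*(N/2)) := by gcongr
  have u2 : ‖α‖*‖q‖ ≤ ‖α‖*N := by gcongr; linarith
  have u3 : ‖β‖*‖p‖ ≤ ‖β‖*N := by gcongr; linarith
  nlinarith [mul_nonneg (norm_nonneg z) hN0.le]

lemma ham_sigma (α β z p q : ℂ) (w : ℝ) (hw : 0 ≤ w) (h : ‖hamPhi α β z p q‖ ≤ w^3) :
    ‖p^3+q^3‖/hamN p q ≤ 3*w + 2*‖z‖ + 3 + 3*(‖α‖+‖β‖) := by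
  have hN0 : 0 < hamN p q := by linarith [hamN_pos p q]
  rcases le_total (√(hamN p q)) w with h1 | h1
  · have := ham_sigma1 p q
    have : 0 ≤ ‖z‖ := norm_nonneg _
    have : 0 ≤ ‖α‖ := norm_nonneg _
    have : 0 ≤ ‖β‖ := norm_nonneg _
    linarith
  · have h2 := ham_sigma2 α β z p q
    have h3 : w^2 ≤ hamN p q := by
      rw [← Real.sq_sqrt hN0.le]; gcongr
    have : 3*‖hamPhi α β z p q‖/hamN p q ≤ 3*w := by
      rw [div_le_iff₀ hN0]
      nlinarith
    linarith



/-- normalised solution -/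
structure HamSys (α β : ℂ) (p q : ℂ → ℂ) : Prop where
  nfp : ∀ z, MeromorphicNFAt p z
  nfq : ∀ z, MeromorphicNFAt q z
  ode : ∀ z : ℂ, AnalyticAt ℂ p z → AnalyticAt ℂ q z →
      deriv p z = -(q z) ^ 2 - z * p z - α ∧ deriv q z = (p z) ^ 2 + z * q z + β

def hamE (p q : ℂ → ℂ) : Set ℂ := {z | ¬ (AnalyticAt ℂ p z ∧ AnalyticAt ℂ q z)}

namespace HamSys
variable {α β : ℂ} {p q : ℂ → ℂ}

lemma countE (h : HamSys α β p q) : (hamE p q).Countable := by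
  have h1 : Meromorphic p := fun z => (h.nfp z).meromorphicAt
  have h2 : Meromorphic q := fun z => (h.nfq z).meromorphicAt
  refine (h1.countable_compl_analyticAt.union h2.countable_compl_analyticAt).mono ?_
  intro z hz
  simp only [hamE, Set.mem_ofPred_eq, not_and_or] at hz
  exact hz

lemma openR (_h : HamSys α β p q) : IsOpen (hamE p q)ᶜ := by
  have : (hamE p q)ᶜ = {z | AnalyticAt ℂ p z} ∩ {z | AnalyticAt ℂ q z} := by
    ext z; simp [hamE]
  rw [this]
  exact (isOpen_analyticAt ℂ p).inter (isOpen_analyticAt ℂ q)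

lemma evR (h : HamSys α β p q) (z : ℂ) : ∀ᶠ w in 𝓝[≠] z, w ∉ hamE p q := by
  filter_upwards [(h.nfp z).meromorphicAt.eventually_analyticAt,
    (h.nfq z).meromorphicAt.eventually_analyticAt] with w h1 h2
  simp [hamE, h1, h2]

lemma tendsto_of_neg {f : ℂ → ℂ} {z : ℂ} (hf : MeromorphicNFAt f z) (hz : ¬ AnalyticAt ℂ f z) :
    Tendsto (fun w => ‖f w‖) (𝓝[≠] z) atTop := by
  rcases meromorphicNFAt_iff_analyticAt_or.1 hf with h1 | ⟨h1, h2, h3⟩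
  · exact absurd h1 hz
  · have := (tendsto_cobounded_iff_meromorphicOrderAt_neg h1).2 h2
    exact tendsto_norm_atTop_iff_cobounded.2 this

lemma tendstoN (h : HamSys α β p q) {z : ℂ} (hz : z ∈ hamE p q) :
    Tendsto (fun w => hamN (p w) (q w)) (𝓝[≠] z) atTop := by
  simp only [hamE, Set.mem_ofPred_eq, not_and_or] at hz
  rcases hz with hz | hz
  · have := (tendsto_pow_atTop (two_ne_zero)).comp (tendsto_of_neg (h.nfp z) hz)
    refine tendsto_atTop_mono ?_ this
    intro w
    simp only [hamN, Function.comp]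
    nlinarith [sq_nonneg ‖q w‖]
  · have := (tendsto_pow_atTop (two_ne_zero)).comp (tendsto_of_neg (h.nfq z) hz)
    refine tendsto_atTop_mono ?_ this
    intro w
    simp only [hamN, Function.comp]
    nlinarith [sq_nonneg ‖p w‖]

lemma hasDerivP (h : HamSys α β p q) {z : ℂ} (hz : z ∉ hamE p q) :
    HasDerivAt p (-(q z) ^ 2 - z * p z - α) z := by
  simp only [hamE, Set.mem_ofPred_eq, not_not] at hz
  rw [← (h.ode z hz.1 hz.2).1]
  exact hz.1.differentiableAt.hasDerivAt

lemma hasDerivQ (h : HamSys α β p q) {z : ℂ} (hz : z ∉ hamE p q) :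
    HasDerivAt q ((p z) ^ 2 + z * q z + β) z := by
  simp only [hamE, Set.mem_ofPred_eq, not_not] at hz
  rw [← (h.ode z hz.1 hz.2).2]
  exact hz.2.differentiableAt.hasDerivAt

lemma contN (h : HamSys α β p q) {z : ℂ} (hz : z ∉ hamE p q) :
    ContinuousAt (fun w => hamN (p w) (q w)) z := by
  have h1 := (h.hasDerivP hz).continuousAt
  have h2 := (h.hasDerivQ hz).continuousAt
  unfold hamN
  fun_prop

end HamSys

lemma exists_seg {E : Set ℂ} (hE : E.Countable) (a z : ℂ) (hz : z ∉ E) {ε : ℝ} (hε : 0 < ε) :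
    ∃ a', dist a' a < ε ∧ ∀ s ∈ Set.Icc (0:ℝ) 1, a' + s * (z - a') ∉ E := by
  by_cases haz : a = z
  · refine ⟨z, by simpa [haz] using hε, ?_⟩
    intro s hs
    simpa using hz
  have hne : a - z ≠ 0 := sub_ne_zero.2 haz
  have hc : ((fun e : ℂ => (((e - z)/(a-z)).im / ((e-z)/(a-z)).re)) '' E).Countable := hE.image _
  have hd := hc.dense_compl ℝ
  have hpos : 0 < ε / ‖a - z‖ := div_pos hε (norm_pos_iff.2 hne)
  obtain ⟨t, ht1, ht2⟩ := hd.exists_mem_open (isOpen_Ioo (a := 0) (b := ε/‖a-z‖))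
    ⟨ε/‖a-z‖/2, by constructor <;> linarith⟩
  refine ⟨a + t * Complex.I * (a - z), ?_, ?_⟩
  · rw [dist_eq_norm]
    simp only [add_sub_cancel_left, norm_mul, Complex.norm_real, Complex.norm_I, mul_one]
    rw [Real.norm_of_nonneg ht2.1.le]
    exact (lt_div_iff₀ (norm_pos_iff.2 hne)).1 ht2.2
  · intro s hs hmem
    rcases eq_or_lt_of_le hs.2 with h1 | h1
    · apply hz
      rw [h1] at hmem
      simpa using hmem
    · apply ht1
      refine ⟨_, hmem, ?_⟩
      have e : ((a + t * Complex.I * (a - z) + s * (z - (a + t * Complex.I * (a - z)))) - z)/(a-z)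
        = ((1 - s : ℝ) : ℂ) * (1 + t * Complex.I) := by
        field_simp
        push_cast
        ring
      simp only [e]
      rw [Complex.re_ofReal_mul, Complex.im_ofReal_mul]
      have : (1 - s) ≠ 0 := by linarith
      simp
      field_simp

namespace HamSys
variable {α β : ℂ} {p q : ℂ → ℂ}

lemma derivPhi (h : HamSys α β p q) (a e : ℂ) (s : ℝ) (hs : a + s * e ∉ hamE p q) :
    HasDerivAt (fun s : ℝ => hamPhi α β (a + s * e) (p (a + s*e)) (q (a+s*e)))
      (let z := a + s * e
       e * hamX (p z) (q z) (-(q z) ^ 2 - z * p z - α) ((p z) ^ 2 + z * q z + β)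
        + cj e * hamY (p z) (q z) (-(q z) ^ 2 - z * p z - α) ((p z) ^ 2 + z * q z + β)) s := by
  have hg : HasDerivAt (fun s : ℝ => a + s * e) e s := by
    have := (((hasDerivAt_id s).ofReal_comp).mul_const e).const_add a
    simpa using this
  have hP := HasDerivAt.comp s (h.hasDerivP hs) hg
  have hQ := HasDerivAt.comp s (h.hasDerivQ hs) hg
  simp only [Function.comp_def] at hP hQ
  have hPc := hP.star
  have hQc := hQ.star
  have hN0 : ((p (a+s*e)) * cj (p (a+s*e)) + (q (a+s*e)) * cj (q (a+s*e)) + 1 : ℂ) ≠ 0 := by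
    rw [← hamN_cast]
    have := hamN_pos (p (a+s*e)) (q (a+s*e))
    exact_mod_cast (by linarith : hamN (p (a+s*e)) (q (a+s*e)) ≠ 0)
  have hNd := ((hP.mul hPc).add (hQ.mul hQc)).add_const 1
  have hA := ((hP.pow 2).mul hQc).sub ((hQ.pow 2).mul hPc)
  have hM := (((((hP.pow 3).add (hQ.pow 3)).div_const 3).add ((hg.mul hP).mul hQ)).add
    (hQ.const_mul α)).add (hP.const_mul β)
  have hF := hM.add (hA.div hNd hN0)
  refine (hF.congr_deriv ?_).congr_of_eventuallyEq (Eventually.of_forall fun s => ?_)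
  · simp only [hamX, hamY, hamN_cast]
    simp only [Pi.add_apply, Pi.mul_apply, Pi.pow_apply, ← starRingEnd_apply, Pi.sub_apply] at hN0 ⊢
    simp only [map_add, map_sub, map_mul, map_pow, map_neg]
    field_simp
    ring
  · simp only [hamPhi, hamN_cast, Pi.add_apply, Pi.mul_apply, Pi.pow_apply, Pi.div_apply, ← starRingEnd_apply, Pi.sub_apply]

end HamSys



namespace HamSys
variable {α β : ℂ} {p q : ℂ → ℂ}

lemma phi_seg (h : HamSys α β p q) (a z : ℂ) (M : ℝ) (hM : 20 + 5*(‖α‖+‖β‖) ≤ M)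
    (hseg : ∀ s ∈ Set.Icc (0:ℝ) 1, a + s * (z - a) ∉ hamE p q)
    (ha : ‖hamPhi α β a (p a) (q a)‖ ≤ M^3) :
    ‖hamPhi α β z (p z) (q z)‖ ≤ (M*(1+‖a‖+‖z-a‖))^3 := by
  have hab : 0 ≤ ‖α‖+‖β‖ := by positivity
  have hM0 : 20 ≤ M := by linarith
  by_cases hza : z = a
  · subst hza
    refine ha.trans ?_
    have : 0 ≤ ‖z‖ := norm_nonneg _
    apply pow_le_pow_left₀ (by linarith)
    simp
    nlinarith
  set e := z - a with he
  have he0 : 0 < ‖e‖ := norm_pos_iff.2 (sub_ne_zero.2 hza)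
  have hder := fun s hs => h.derivPhi a e s (hseg s hs)
  have hB : ∀ s : ℝ, HasDerivAt (fun s : ℝ => (M*(1+‖a‖+s*‖e‖))^3)
      (3*(M*(1+‖a‖+s*‖e‖))^2*(M*‖e‖)) s := by
    intro s
    have := ((((hasDerivAt_id s).mul_const ‖e‖).const_add (1+‖a‖)).const_mul M).fun_pow 3
    simpa using this
  have key := image_norm_le_of_norm_deriv_right_lt_deriv_boundary' (a := 0) (b := 1)
    (fun s hs => (hder s hs).continuousAt.continuousWithinAt)
    (fun s hs => (hder s ⟨hs.1, hs.2.le⟩).hasDerivWithinAt) (B := fun s : ℝ => (M*(1+‖a‖+s*‖e‖))^3)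
    (B' := fun s : ℝ => 3*(M*(1+‖a‖+s*‖e‖))^2*(M*‖e‖)) ?_
    (fun s hs => (hB s).continuousAt.continuousWithinAt)
    (fun s hs => (hB s).hasDerivWithinAt) ?_ (x := 1) ⟨zero_le_one, le_rfl⟩
  · simpa [he] using key
  · simp only [Complex.ofReal_zero, zero_mul, add_zero]
    refine ha.trans (pow_le_pow_left₀ (by linarith) ?_ 3)
    nlinarith [norm_nonneg a]
  · intro s hs heq
    set w := a + s * e with hw
    have hwn : ‖w‖ ≤ ‖a‖ + s*‖e‖ := by
      refine (norm_add_le _ _).trans ?_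
      rw [norm_mul, Complex.norm_real, Real.norm_of_nonneg hs.1]
    set l := 1 + ‖a‖ + s*‖e‖ with hl
    have hl1 : 1 ≤ l := by
      have := norm_nonneg a
      have := mul_nonneg hs.1 he0.le
      linarith
    have hsig := ham_sigma α β w (p w) (q w) (M*l) (by nlinarith) heq.le
    have hX := hamX_le α β w (p w) (q w) _ _ rfl rfl
    have hY := hamY_le α β w (p w) (q w) _ _ rfl rfl
    have hσ0 : 0 ≤ ‖p w^3+q w^3‖/hamN (p w) (q w) := div_nonneg (norm_nonneg _) (by linarith [hamN_pos (p w) (q w)])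
    set σ := ‖p w^3+q w^3‖/hamN (p w) (q w) with hσ
    have hσ4 : σ ≤ 4*M*l := by nlinarith
    have hwl : ‖w‖ ≤ l := by linarith
    refine lt_of_le_of_lt (norm_add_le _ _) ?_
    rw [norm_mul, norm_mul, RCLike.norm_conj, ← mul_add]
    have hσ2 : σ^2 ≤ (4*M*l)^2 := pow_le_pow_left₀ hσ0 hσ4 2
    have hwσ : ‖w‖*σ ≤ l*(4*M*l) := mul_le_mul hwl hσ4 hσ0 (by linarith)
    have hXY : ‖hamX (p w) (q w) (-(q w) ^ 2 - w * p w - α) ((p w) ^ 2 + w * q w + β)‖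
      + ‖hamY (p w) (q w) (-(q w) ^ 2 - w * p w - α) ((p w) ^ 2 + w * q w + β)‖ < 3*(M*l)^2*M := by
      have h1 : M ≤ M*l^2 := by nlinarith
      have h2 : M*l^2*20 ≤ M*l^2*M := by gcongr
      have h3 : M*M*l^2*20 ≤ M*M*l^2*M := by gcongr
      nlinarith
    calc _ < ‖e‖ * (3*(M*l)^2*M) := by gcongr
      _ = _ := by ring

lemma contPhi (h : HamSys α β p q) {z : ℂ} (hz : z ∉ hamE p q) :
    ContinuousAt (fun w => hamPhi α β w (p w) (q w)) z := by
  have h1 := (h.hasDerivP hz).continuousAt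
  have h2 := (h.hasDerivQ hz).continuousAt
  have h3 := h.contN hz
  have hN : (hamN (p z) (q z) : ℂ) ≠ 0 := by
    have := hamN_pos (p z) (q z)
    exact_mod_cast (by linarith : hamN (p z) (q z) ≠ 0)
  have h4 : ContinuousAt (fun w => (hamN (p w) (q w) : ℂ)) z := Complex.continuous_ofReal.continuousAt.comp h3
  have h5 : ContinuousAt (fun w => cj (p w)) z := Complex.continuous_conj.continuousAt.comp h1
  have h6 : ContinuousAt (fun w => cj (q w)) z := Complex.continuous_conj.continuousAt.comp h2
  unfold hamPhi
  refine ContinuousAt.add (by fun_prop) (ContinuousAt.div (by fun_prop) h4 hN)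

lemma phi_bound (h : HamSys α β p q) :
    ∃ M : ℝ, 0 < M ∧ ∀ z, z ∉ hamE p q → ‖hamPhi α β z (p z) (q z)‖ ≤ M*(1+‖z‖)^3 := by
  obtain ⟨a0, ha0⟩ := (h.countE.dense_compl ℂ).nonempty
  have hev : ∀ᶠ a in 𝓝 a0, ‖hamPhi α β a (p a) (q a)‖ < ‖hamPhi α β a0 (p a0) (q a0)‖ + 1 :=
    (h.contPhi ha0).norm.eventually_lt_const (by simp)
  obtain ⟨ε, hε, hball⟩ := Metric.eventually_nhds_iff.1 hev
  set L := ‖hamPhi α β a0 (p a0) (q a0)‖ + 1 with hL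
  have hL1 : 1 ≤ L := by have := norm_nonneg (hamPhi α β a0 (p a0) (q a0)); linarith
  have hab : 0 ≤ ‖α‖+‖β‖ := by positivity
  set M := 20 + 5*(‖α‖+‖β‖) + L with hM
  refine ⟨(M*(3+2*‖a0‖))^3, by positivity, ?_⟩
  intro z hz
  obtain ⟨a, ha, hseg⟩ := exists_seg h.countE a0 z hz (lt_min hε one_pos)
  have h1 := hball (ha.trans_le (min_le_left _ _))
  have h2 := h.phi_seg a z M (by linarith) hseg (by
    refine h1.le.trans ?_
    have : L ≤ M := by linarith
    have hM1 : 1 ≤ M := by linarith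
    nlinarith [mul_nonneg (by linarith : 0 ≤ M) (by nlinarith : 0 ≤ M^2 - 1)])
  refine h2.trans ?_
  rw [← mul_pow]
  refine pow_le_pow_left₀ (by positivity) ?_ 3
  have hM0 : 0 ≤ M := by linarith
  rw [mul_assoc]
  refine mul_le_mul_of_nonneg_left ?_ hM0
  have h3 : ‖a‖ ≤ ‖a0‖ + 1 := by
    have := ha.trans_le (min_le_right _ _)
    rw [dist_eq_norm] at this
    have := norm_le_norm_add_norm_sub' a a0
    linarith
  have h4 := norm_sub_le z a
  nlinarith [norm_nonneg z, norm_nonneg a0, mul_nonneg (norm_nonneg z) (norm_nonneg a0)]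

lemma derivN (h : HamSys α β p q) (a e : ℂ) (s : ℝ) (hs : a + s * e ∉ hamE p q) :
    ∃ D : ℝ, HasDerivAt (fun s : ℝ => hamN (p (a + s*e)) (q (a+s*e))) D s ∧
      |D| ≤ 2*‖e‖*(√(hamN (p (a + s*e)) (q (a+s*e)))^3
        + ‖a+s*e‖*hamN (p (a + s*e)) (q (a+s*e))
        + (‖α‖+‖β‖)*√(hamN (p (a + s*e)) (q (a+s*e)))) := by
  have hg : HasDerivAt (fun s : ℝ => a + s * e) e s := by
    have := (((hasDerivAt_id s).ofReal_comp).mul_const e).const_add a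
    simpa using this
  have hP := HasDerivAt.comp s (h.hasDerivP hs) hg
  have hQ := HasDerivAt.comp s (h.hasDerivQ hs) hg
  simp only [Function.comp_def] at hP hQ
  have hd := (hP.norm_sq.add hQ.norm_sq).add_const 1
  refine ⟨_, hd, ?_⟩
  set z := a + s * e
  set x := p z
  set y := q z
  have e1 : 2 * inner ℝ x ((-y ^ 2 - z * x - α) * e) + 2 * inner ℝ y ((x ^ 2 + z * y + β) * e)
    = 2 * (e * ((x^2 * cj y - y^2 * cj x) + z*(y * cj y - x * cj x) + (β * cj y - α * cj x))).re := by
    rw [Complex.inner, Complex.inner, ← mul_add, ← Complex.add_re]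
    congr 2
    ring
  rw [e1, abs_mul, abs_two, mul_assoc]
  gcongr
  refine (Complex.abs_re_le_norm _).trans ?_
  rw [norm_mul]
  gcongr
  refine (norm_add_le _ _).trans (add_le_add ((norm_add_le _ _).trans (add_le_add (ham_A_le x y) ?_)) ?_)
  · rw [norm_mul]
    gcongr
    refine (norm_sub_le _ _).trans ?_
    simp only [norm_mul, RCLike.norm_conj, hamN]
    nlinarith
  · refine (norm_sub_le _ _).trans ?_
    simp only [norm_mul, RCLike.norm_conj]
    have h1 := mul_le_mul_of_nonneg_left (ham_p_le x y) (norm_nonneg α)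
    have h2 := mul_le_mul_of_nonneg_left (ham_q_le x y) (norm_nonneg β)
    linarith

lemma kappa (h : HamSys α β p q) (a z : ℂ) (r : ℝ) (hr : 1 ≤ r)
    (hseg : ∀ s ∈ Set.Icc (0:ℝ) 1, a + s * (z - a) ∉ hamE p q)
    (ha : ‖a‖ ≤ 3*r) (hz : ‖z‖ ≤ 3*r) :
    (√(hamN (p z) (q z) + r^2))⁻¹ ≤ (√(hamN (p a) (q a) + r^2))⁻¹ + (4+(‖α‖+‖β‖))*‖z-a‖ := by
  have hD := fun (s : ℝ) (hs : s ∈ Set.Icc (0:ℝ) 1) => h.derivN a (z-a) s (hseg s hs)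
  choose! D hD1 hD2 using hD
  set F : ℝ → ℝ := fun s => hamN (p (a + s*(z-a))) (q (a+s*(z-a))) with hF
  have hF1 : ∀ s, 1 ≤ F s := fun s => hamN_pos _ _
  have hVpos : ∀ s, 0 < F s + r^2 := fun s => by have := hF1 s; positivity
  have hd : ∀ s ∈ Set.Icc (0:ℝ) 1, HasDerivAt (fun s => (√(F s + r^2))⁻¹)
      (-(D s / (2*√(F s + r^2))) / (√(F s + r^2))^2) s := by
    intro s hs
    have h1 := ((hD1 s hs).add_const (r^2)).sqrt (hVpos s).ne'
    exact h1.inv (Real.sqrt_ne_zero'.2 (hVpos s))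
  have hbd : ∀ s ∈ Set.Icc (0:ℝ) 1, ‖-(D s / (2*√(F s + r^2))) / (√(F s + r^2))^2‖ ≤ (4+(‖α‖+‖β‖))*‖z-a‖ := by
    intro s hs
    have hv : 0 < √(F s + r^2) := Real.sqrt_pos.2 (hVpos s)
    have hv2 : √(F s + r^2)^2 = F s + r^2 := Real.sq_sqrt (hVpos s).le
    have hb := hD2 s hs
    have hm : √(F s) ≤ √(F s + r^2) := Real.sqrt_le_sqrt (by nlinarith)
    have hrv : r ≤ √(F s + r^2) := Real.le_sqrt_of_sq_le (by linarith [hF1 s])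
    have hzz : ‖a + s*(z-a)‖ ≤ 3*r := by
      have e : a + s*(z-a) = (1-s:ℝ) * a + (s:ℝ) * z := by push_cast; ring
      rw [e]
      refine (norm_add_le _ _).trans ?_
      rw [norm_mul, norm_mul, Complex.norm_real, Complex.norm_real, Real.norm_of_nonneg hs.1,
        Real.norm_of_nonneg (by linarith [hs.2] : 0 ≤ 1 - s)]
      nlinarith [hs.1, hs.2]
    change |D s| ≤ 2*‖z-a‖*(√(F s)^3 + ‖a+s*(z-a)‖*F s + (‖α‖+‖β‖)*√(F s)) at hb
    set v := √(F s + r^2)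
    rw [norm_div, norm_neg, norm_div, Real.norm_eq_abs, norm_mul, norm_pow, Real.norm_of_nonneg hv.le, Real.norm_two]
    rw [div_div, div_le_iff₀ (by positivity)]
    refine hb.trans ?_
    have hab : 0 ≤ ‖α‖+‖β‖ := by positivity
    have hFv : F s ≤ v^2 := by rw [hv2]; nlinarith
    have hv1 : 1 ≤ v := by linarith
    have h1 : √(F s)^3 ≤ v^3 := pow_le_pow_left₀ (Real.sqrt_nonneg _) hm 3
    have h2 : ‖a+s*(z-a)‖*F s ≤ (3*v)*v^2 := mul_le_mul (by linarith) hFv (by linarith [hF1 s]) (by linarith)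
    have h3 : (‖α‖+‖β‖)*√(F s) ≤ (‖α‖+‖β‖)*v^3 := by
      gcongr
      nlinarith [mul_nonneg hv.le (by nlinarith : 0 ≤ v^2-1)]
    calc _ ≤ 2*‖z-a‖*(v^3 + (3*v)*v^2 + (‖α‖+‖β‖)*v^3) := by gcongr
      _ = _ := by ring
  have key := Convex.norm_image_sub_le_of_norm_hasDerivWithin_le (fun s hs => (hd s hs).hasDerivWithinAt)
    hbd (convex_Icc 0 1) (x := 0) (y := 1) (by simp) (by simp)
  simp only [hF] at key
  simp at key
  have := le_abs_self ((√(hamN (p z) (q z) + r^2))⁻¹ - (√(hamN (p a) (q a) + r^2))⁻¹)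
  linarith

end HamSys



lemma ham_static (p q : ℂ) (hN : 100 ≤ hamN p q)
    (hS : 32*‖p^3+q^3‖ ≤ √(hamN p q)*hamN p q) :
    hamN p q ≤ 4*‖q‖^2 ∧ ‖p‖^2 ≤ 5/4*‖q‖^2 ∧ 3/4*‖q‖^2 ≤ ‖p‖^2 := by
  have hD := ham_D p q
  have h3 : √(hamN p q)^2 = hamN p q := Real.sq_sqrt (by linarith)
  have e : ‖p‖^2+‖q‖^2 = hamN p q - 1 := by unfold hamN; ring
  rw [e] at hD
  set N := hamN p q
  set m := √N
  have hm : 0 ≤ m := Real.sqrt_nonneg _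
  have h4 : (32*‖p^3+q^3‖)^2 ≤ (m*N)^2 := pow_le_pow_left₀ (by positivity) hS 2
  have h5 : (m*N)^2 = N^3 := by rw [mul_pow, h3]; ring
  have h6 : (‖p‖^2-‖q‖^2)^2 ≤ (N/16)^2 := by
    have : 1024*((‖p‖^2-‖q‖^2)^2*(N-1)) ≤ N^3 := by nlinarith
    have h7 : (‖p‖^2-‖q‖^2)^2*(N/2) ≤ (‖p‖^2-‖q‖^2)^2*(N-1) := by
      gcongr; linarith
    have h8 : ((‖p‖^2-‖q‖^2)^2*512)*N ≤ N^2*N := by nlinarith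
    have h9 := le_of_mul_le_mul_right h8 (by linarith)
    nlinarith
  have h7 := abs_le_of_sq_le_sq' h6 (by linarith)
  obtain ⟨h8, h9⟩ := h7
  refine ⟨by linarith, by linarith, by linarith⟩

namespace HamSys
variable {α β : ℂ} {p q : ℂ → ℂ}

lemma propagate (h : HamSys α β p q) (K r : ℝ) (hK : 2 ≤ K) (hr : 1 ≤ r) (z1 : ℂ) (hz1 : ‖z1‖ ≤ r)
    (hbig : ∀ᶠ a in 𝓝 z1, a ∉ hamE p q → 4*K^2*r^2 ≤ hamN (p a) (q a))
    (z : ℂ) (hz : dist z z1 < 1/(4*(4+(‖α‖+‖β‖))*K)/r) (hzE : z ∉ hamE p q) :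
    K^2*r^2 ≤ hamN (p z) (q z) := by
  have hab : 0 ≤ ‖α‖+‖β‖ := by positivity
  set C := 4 + (‖α‖+‖β‖) with hC
  set d := 1/(4*C*K)/r with hd
  have hd1 : d ≤ 1 := by
    rw [hd, div_div, div_le_one (by positivity)]
    have : 16 * 2 ≤ 4*C*K := by nlinarith
    nlinarith
  obtain ⟨ε, hε, hball⟩ := Metric.eventually_nhds_iff.1 hbig
  obtain ⟨a, ha, hseg⟩ := exists_seg h.countE z1 z hzE (ε := min ε (d - dist z z1)) (lt_min hε (by linarith))
  have haE : a ∉ hamE p q := by simpa using hseg 0 (by simp)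
  have h1 := hball (ha.trans_le (min_le_left _ _)) haE
  have h2 : ‖z - a‖ ≤ d := by
    have := ha.trans_le (min_le_right _ _)
    have h3 := dist_triangle_right z a z1
    rw [← dist_eq_norm]
    linarith
  have hz3 : ‖z‖ ≤ 3*r := by
    have := norm_le_norm_add_norm_sub' z z1
    rw [dist_eq_norm] at hz
    linarith
  have ha3 : ‖a‖ ≤ 3*r := by
    have := norm_le_norm_add_norm_sub' a z1
    have h3 := ha.trans_le (min_le_right _ _)
    have h4 := dist_nonneg (x := z) (y := z1)
    rw [dist_eq_norm] at h3
    linarith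
  have hk := h.kappa a z r hr hseg ha3 hz3
  have hka : (√(hamN (p a) (q a) + r^2))⁻¹ ≤ (2*K*r)⁻¹ := by
    apply inv_anti₀ (by positivity)
    apply Real.le_sqrt_of_sq_le
    nlinarith
  have hk2 : (√(hamN (p z) (q z) + r^2))⁻¹ ≤ (4/3*K*r)⁻¹ := by
    have : C*‖z-a‖ ≤ C*d := by gcongr
    have e : (4/3*K*r)⁻¹ = (2*K*r)⁻¹ + C*d := by
      have hC0 : 0 < C := by linarith
      have hCne : C ≠ 0 := hC0.ne'
      rw [hd]; field_simp; norm_num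
    linarith
  have hVpos : 0 < hamN (p z) (q z) + r^2 := by have := hamN_pos (p z) (q z); positivity
  have h5 := (inv_le_inv₀ (Real.sqrt_pos.2 hVpos) (by positivity)).1 hk2
  have h6 := (Real.le_sqrt (by positivity) hVpos.le).1 h5
  nlinarith [mul_le_mul_of_nonneg_right (by nlinarith : 4 ≤ K^2) (sq_nonneg r)]

lemma dynamic (h : HamSys α β p q) : ∃ K : ℝ, 2 ≤ K ∧ ∀ r : ℝ, 1 ≤ r → ∀ z, z ∉ hamE p q → ‖z‖ ≤ 3*r →
    K^2*r^2 ≤ hamN (p z) (q z) → hamN (p z) (q z) ≤ 4*‖q z‖^2 ∧ ‖p z‖ ≤ 2*‖q z‖ ∧ q z ≠ 0 ∧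
      HasDerivAt (fun w => (q w)⁻¹) (-((p z) ^ 2 + z * q z + β)/(q z)^2) z ∧
      1/2 ≤ ‖-((p z) ^ 2 + z * q z + β)/(q z)^2‖ ∧ ‖-((p z) ^ 2 + z * q z + β)/(q z)^2‖ ≤ 2 := by
  obtain ⟨M, hM, hphi⟩ := h.phi_bound
  have hab : 0 ≤ ‖α‖+‖β‖ := by positivity
  set K := 100 + 64*‖β‖ + 32*(192*M+9+3*(‖α‖+‖β‖)) with hK
  have hK100 : 100 ≤ K := by have := norm_nonneg β; linarith
  have hKb : 64*‖β‖ ≤ K := by linarith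
  refine ⟨K, by linarith, ?_⟩
  intro r hr z hz hzr hN
  have hN100 : 100 ≤ hamN (p z) (q z) := by
    have : (100:ℝ)^2*1^2 ≤ K^2*r^2 := by gcongr
    linarith
  have hN0 : 0 < hamN (p z) (q z) := by linarith
  have hm : K*r ≤ √(hamN (p z) (q z)) := Real.le_sqrt_of_sq_le (by nlinarith)
  have hphiz : ‖hamPhi α β z (p z) (q z)‖ ≤ 64*M*r^3 := by
    refine (hphi z hz).trans ?_
    have : (1+‖z‖)^3 ≤ (4*r)^3 := pow_le_pow_left₀ (by positivity) (by linarith) 3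
    calc _ ≤ M*(4*r)^3 := by gcongr
      _ = _ := by ring
  have hs2 := ham_sigma2 α β z (p z) (q z)
  have hs3 : 3*‖hamPhi α β z (p z) (q z)‖/hamN (p z) (q z) ≤ 192*M*r := by
    rw [div_le_iff₀ hN0]
    have h1 : r^2 ≤ hamN (p z) (q z) := by
      have : 1^2*r^2 ≤ K^2*r^2 := by gcongr; linarith
      linarith
    have h2 : 192*M*r*r^2 ≤ 192*M*r*hamN (p z) (q z) := by gcongr
    nlinarith
  have hs4 : ‖p z^3+q z^3‖/hamN (p z) (q z) ≤ (192*M+9+3*(‖α‖+‖β‖))*r := by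
    nlinarith
  rw [div_le_iff₀ hN0] at hs4
  have hst := ham_static (p z) (q z) hN100 (by
    have h1 : 32*((192*M+9+3*(‖α‖+‖β‖))*r) ≤ √(hamN (p z) (q z)) := by
      have : 32*((192*M+9+3*(‖α‖+‖β‖)))*r ≤ K*r := by gcongr; have := norm_nonneg β; linarith
      linarith
    have := mul_le_mul_of_nonneg_right h1 hN0.le
    linarith)
  obtain ⟨h1, h2, h3⟩ := hst
  have hq0 : q z ≠ 0 := by
    intro h0
    have h00 : ‖q z‖ = 0 := by simp [h0]
    rw [h00] at h1
    norm_num at h1; linarith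
  have hy : 0 < ‖q z‖ := norm_pos_iff.2 hq0
  have hyK : K*r ≤ 2*‖q z‖ := by
    apply le_of_sq_le_sq _ (by positivity)
    nlinarith
  have hbd : ‖(z * q z + β)/(q z)^2‖ ≤ 1/8 := by
    rw [norm_div, norm_pow, div_le_iff₀ (by positivity)]
    have h4 : ‖z * q z + β‖ ≤ 3*r*‖q z‖ + ‖β‖ := by
      refine (norm_add_le _ _).trans ?_
      rw [norm_mul]
      gcongr
    have h5 : 100*r ≤ 2*‖q z‖ := by nlinarith
    have h6 : 64*‖β‖ ≤ 2*‖q z‖ := by nlinarith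
    nlinarith
  have e : -((p z) ^ 2 + z * q z + β)/(q z)^2 = -((p z / q z)^2) - (z * q z + β)/(q z)^2 := by
    field_simp; ring
  have hsn : ‖-((p z / q z)^2)‖ = ‖p z‖^2/‖q z‖^2 := by
    rw [norm_neg, norm_pow, norm_div, div_pow]
  have hs5 : ‖p z‖^2/‖q z‖^2 ≤ 5/4 := by rw [div_le_iff₀ (by positivity)]; exact h2
  have hs6 : 3/4 ≤ ‖p z‖^2/‖q z‖^2 := by rw [le_div_iff₀ (by positivity)]; exact h3
  refine ⟨h1, ?_, hq0, (h.hasDerivQ hz).inv hq0, ?_, ?_⟩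
  · apply le_of_sq_le_sq _ (by positivity)
    nlinarith
  · rw [e]
    have := norm_sub_norm_le (-((p z / q z)^2)) ((z * q z + β)/(q z)^2)
    linarith
  · rw [e]
    have := norm_sub_le (-((p z / q z)^2)) ((z * q z + β)/(q z)^2)
    linarith

lemma localE (h : HamSys α β p q) {z : ℂ} (hz : z ∈ hamE p q) (U : ∀ᶠ w in 𝓝[≠] z, hamN (p w) (q w) ≤ 4*‖q w‖^2) :
    q z = 0 ∧ ContinuousAt (fun w => (q w)⁻¹) z := by
  have h1 := h.tendstoN hz
  have h2 : Tendsto (fun w => ‖q w‖) (𝓝[≠] z) atTop := by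
    have h3 : Tendsto (fun w => 4*‖q w‖^2) (𝓝[≠] z) atTop := tendsto_atTop_mono' _ U h1
    have h4 := (Real.tendsto_sqrt_atTop.comp h3).const_mul_atTop (by norm_num : (0:ℝ) < 1/2)
    refine h4.congr (fun w => ?_)
    simp only [Function.comp]
    rw [show 4*‖q w‖^2 = (2*‖q w‖)^2 by ring, Real.sqrt_sq (by positivity)]
    ring
  have h3 : q z = 0 := by
    rcases meromorphicNFAt_iff_analyticAt_or.1 (h.nfq z) with h4 | h4
    · exfalso
      have h5 := (h4.continuousAt.norm.tendsto).mono_left (nhdsWithin_le_nhds (s := {z}ᶜ))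
      exact not_tendsto_nhds_of_tendsto_atTop h2 _ h5
    · exact h4.2.2
  refine ⟨h3, ?_⟩
  rw [continuousAt_iff_punctured_nhds]
  simp only [h3, inv_zero]
  exact tendsto_inv₀_cobounded.comp (tendsto_norm_atTop_iff_cobounded.1 h2)

theorem localLemma (h : HamSys α β p q) : ∃ K δ : ℝ, 2 ≤ K ∧ 0 < δ ∧ δ ≤ 1 ∧ ∀ r : ℝ, 1 ≤ r → ∀ z1 : ℂ, ‖z1‖ ≤ r →
    (∀ᶠ a in 𝓝 z1, a ∉ hamE p q → 4*K^2*r^2 ≤ hamN (p a) (q a)) →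
    ContinuousOn (fun w => (q w)⁻¹) (Metric.ball z1 (δ/r)) ∧
    (∀ z ∈ Metric.ball z1 (δ/r), ∀ z' ∈ Metric.ball z1 (δ/r), ‖z - z'‖/4 ≤ ‖(q z)⁻¹ - (q z')⁻¹‖) ∧
    (∀ z ∈ Metric.ball z1 (δ/r), z ∈ hamE p q → q z = 0) ∧
    (∀ z ∈ Metric.ball z1 (δ/r), z ∉ hamE p q → ‖p z‖ ≤ 2*‖q z‖ ∧ q z ≠ 0) := by
  obtain ⟨K, hK2, hdyn⟩ := h.dynamic
  have hab : 0 ≤ ‖α‖+‖β‖ := by positivity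
  set δ := 1/(4*(4+(‖α‖+‖β‖))*K) with hδ
  have hδ0 : 0 < δ := by positivity
  have hδ1 : δ ≤ 1 := by
    rw [hδ, div_le_one (by positivity)]
    nlinarith
  refine ⟨K, δ/20, hK2, by positivity, by linarith, ?_⟩
  intro r hr z1 hz1 hbig
  set R := δ/r with hR
  have hR0 : 0 < R := by positivity
  have hR1 : R ≤ 1 := by rw [hR, div_le_one (by positivity)]; linarith
  have hreg : ∀ z ∈ Metric.ball z1 R, z ∉ hamE p q → _ := fun z hz hzE =>
    hdyn r hr z hzE (by
      have := norm_le_norm_add_norm_sub' z z1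
      rw [Metric.mem_ball, dist_eq_norm] at hz
      linarith) (h.propagate K r hK2 hr z1 hz1 hbig z hz hzE)
  set t : ℂ → ℂ := fun w => (q w)⁻¹ with ht
  have hevb : ∀ z ∈ Metric.ball z1 R, ∀ᶠ w in 𝓝[≠] z, w ∈ Metric.ball z1 R ∧ w ∉ hamE p q := by
    intro z hz
    exact ((Metric.isOpen_ball.eventually_mem hz).filter_mono nhdsWithin_le_nhds).and (h.evR z)
  have hE : ∀ z ∈ Metric.ball z1 R, z ∈ hamE p q → q z = 0 ∧ ContinuousAt t z := by
    intro z hz hzE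
    apply h.localE hzE
    filter_upwards [hevb z hz] with w hw
    exact (hreg w hw.1 hw.2).1
  have hdiffat : ∀ z ∈ Metric.ball z1 R, DifferentiableAt ℂ t z := by
    intro z hz
    by_cases hzE : z ∈ hamE p q
    · obtain ⟨s, hs1, hs2, hs3⟩ := mem_nhds_iff.1 (mem_nhdsWithin_iff_exists_mem_nhds_inter.1 (hevb z hz)).choose_spec.1
      have hss := (mem_nhdsWithin_iff_exists_mem_nhds_inter.1 (hevb z hz)).choose_spec.2
      have h1 : DifferentiableOn ℂ t (s \ {z}) := by
        intro w hw
        have hw2 := hss ⟨hs1 hw.1, hw.2⟩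
        exact (hreg w hw2.1 hw2.2).2.2.2.1.differentiableAt.differentiableWithinAt
      have h2 := (Complex.differentiableOn_compl_singleton_and_continuousAt_iff (hs2.mem_nhds hs3)).1 ⟨h1, (hE z hz hzE).2⟩
      exact h2.differentiableAt (hs2.mem_nhds hs3)
    · exact (hreg z hz hzE).2.2.2.1.differentiableAt
  have hdiff : DifferentiableOn ℂ t (Metric.ball z1 R) := fun z hz => (hdiffat z hz).differentiableWithinAt
  have hdd : DifferentiableOn ℂ (deriv t) (Metric.ball z1 R) := hdiff.deriv Metric.isOpen_ball
  have hbds : ∀ z ∈ Metric.ball z1 R, 1/2 ≤ ‖deriv t z‖ ∧ ‖deriv t z‖ ≤ 2 := by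
    intro z hz
    have hc : Tendsto (fun w => ‖deriv t w‖) (𝓝[≠] z) (𝓝 ‖deriv t z‖) :=
      ((hdd.differentiableAt (Metric.isOpen_ball.mem_nhds hz)).continuousAt.norm.tendsto).mono_left nhdsWithin_le_nhds
    have hev : ∀ᶠ w in 𝓝[≠] z, 1/2 ≤ ‖deriv t w‖ ∧ ‖deriv t w‖ ≤ 2 := by
      filter_upwards [hevb z hz] with w hw
      have h1 := (hreg w hw.1 hw.2).2.2.2
      rw [h1.1.deriv]
      exact h1.2
    exact ⟨ge_of_tendsto hc (hev.mono fun w hw => hw.1), le_of_tendsto hc (hev.mono fun w hw => hw.2)⟩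
  have hz1R : z1 ∈ Metric.ball z1 R := Metric.mem_ball_self hR0
  have hmaps : Set.MapsTo (deriv t) (Metric.ball z1 R) (Metric.closedBall (deriv t z1) 5) := by
    intro z hz
    rw [Metric.mem_closedBall, dist_eq_norm]
    refine (norm_sub_le _ _).trans ?_
    linarith [(hbds z hz).2, (hbds z1 hz1R).2]
  have hsub : Metric.ball z1 (δ/20/r) ⊆ Metric.ball z1 R := by
    apply Metric.ball_subset_ball
    rw [hR]; gcongr; linarith
  have hlip : ∀ z ∈ Metric.ball z1 (δ/20/r), ‖deriv t z - deriv t z1‖ ≤ 1/4 := by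
    intro z hz
    have h1 := Complex.dist_le_div_mul_dist_of_mapsTo_ball hdd hmaps (hsub hz)
    rw [← dist_eq_norm]
    refine h1.trans ?_
    have h2 : dist z z1 ≤ δ/20/r := (Metric.mem_ball.1 hz).le
    calc 5/R*dist z z1 ≤ 5/R*(δ/20/r) := by gcongr
      _ = 1/4 := by rw [hR]; field_simp; norm_num
  refine ⟨fun z hz => (hdiffat z (hsub hz)).continuousAt.continuousWithinAt, ?_, fun z hz hzE => (hE z (hsub hz) hzE).1, fun z hz hzE => ⟨(hreg z (hsub hz) hzE).2.1, (hreg z (hsub hz) hzE).2.2.1⟩⟩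
  intro z hz z' hz'
  have hmv := Convex.norm_image_sub_le_of_norm_hasDerivWithin_le (f := fun w => t w - deriv t z1 * w) (f' := fun w => deriv t w - deriv t z1)
    (s := Metric.ball z1 (δ/20/r)) (C := 1/4) (x := z') (y := z) ?_ hlip (convex_ball _ _) hz' hz
  · have e : deriv t z1 * (z - z') = (t z - t z') - ((t z - deriv t z1 * z) - (t z' - deriv t z1 * z')) := by ring
    have h1 := congrArg norm e
    rw [norm_mul] at h1
    have h2 := norm_sub_le (t z - t z') ((t z - deriv t z1 * z) - (t z' - deriv t z1 * z'))
    have h3 := mul_le_mul_of_nonneg_right (hbds z1 hz1R).1 (norm_nonneg (z - z'))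
    change _ ≤ ‖t z - t z'‖
    linarith
  · intro w hw
    have h1 := (hdiffat w (hsub hw)).hasDerivAt.sub ((hasDerivAt_id w).const_mul (deriv t z1))
    rw [mul_one] at h1
    exact h1.hasDerivWithinAt

end HamSys


lemma grid_count (S : Set ℂ) (r d : ℝ) (hr : 0 ≤ r) (hd : 0 < d) (hS : ∀ z ∈ S, ‖z‖ ≤ r)
    (hsep : ∀ z ∈ S, ∀ w ∈ S, z ≠ w → d ≤ dist z w) :
    S.Finite ∧ (S.ncard : ℝ) ≤ (2*(2*r/d+1)+1)^2 := by
  set m : ℝ := 2/d with hm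
  have hm0 : 0 < m := by positivity
  set M : ℤ := ⌈m*r⌉ with hM
  set F : ℂ → ℤ × ℤ := fun z => (⌊m*z.re⌋, ⌊m*z.im⌋) with hF
  set T : Finset (ℤ × ℤ) := Finset.Icc (-M) M ×ˢ Finset.Icc (-M) M with hT
  have hb : ∀ x : ℝ, |x| ≤ r → ⌊m*x⌋ ∈ Finset.Icc (-M) M := by
    intro x hx
    rw [abs_le] at hx
    rw [Finset.mem_Icc]
    have hMr : m*r ≤ M := Int.le_ceil _
    constructor
    · rw [Int.le_floor]; push_cast; nlinarith
    · have h1 : ((⌊m*x⌋ : ℤ) : ℝ) ≤ M := (Int.floor_le _).trans (by nlinarith)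
      exact_mod_cast h1
  have hmaps : ∀ z ∈ S, F z ∈ (T : Set (ℤ × ℤ)) := by
    intro z hz
    have h1 := hS z hz
    simp only [hF, hT, Finset.mem_coe, Finset.mem_product]
    exact ⟨hb _ ((Complex.abs_re_le_norm z).trans h1), hb _ ((Complex.abs_im_le_norm z).trans h1)⟩
  have hfl : ∀ x y : ℝ, ⌊m*x⌋ = ⌊m*y⌋ → |x-y| < d/2 := by
    intro x y hxy
    have h1 := Int.abs_sub_lt_one_of_floor_eq_floor hxy
    rw [← mul_sub, abs_mul, abs_of_pos hm0] at h1
    rw [hm, div_mul_eq_mul_div, div_lt_one hd] at h1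
    linarith
  have hinj : Set.InjOn F S := by
    intro z hz w hw hzw
    by_contra hne
    have h1 := hsep z hz w hw hne
    simp only [hF, Prod.mk.injEq] at hzw
    have h2 := hfl _ _ hzw.1
    have h3 := hfl _ _ hzw.2
    have h4 := Complex.norm_le_abs_re_add_abs_im (z - w)
    rw [Complex.sub_re, Complex.sub_im] at h4
    rw [dist_eq_norm] at h1
    linarith
  have hfin : S.Finite := Set.Finite.of_injOn hmaps hinj T.finite_toSet
  refine ⟨hfin, ?_⟩
  have h1 : S.ncard ≤ (T : Set (ℤ × ℤ)).ncard := Set.ncard_le_ncard_of_injOn F hmaps hinj T.finite_toSet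
  rw [Set.ncard_coe_finset, hT, Finset.card_product, Int.card_Icc] at h1
  have h2 : (S.ncard : ℝ) ≤ ((M + 1 - -M).toNat : ℝ) * ((M + 1 - -M).toNat : ℝ) := by exact_mod_cast h1
  have hM0 : 0 ≤ M := Int.ceil_nonneg (by positivity)
  have h3 : ((M + 1 - -M).toNat : ℝ) = 2*M+1 := by
    have h4 : (((M + 1 - -M).toNat : ℤ)) = 2*M+1 := by omega
    exact_mod_cast h4
  rw [h3] at h2
  have h5 : (M : ℝ) ≤ 2*r/d+1 := by
    have := (Int.ceil_lt_add_one (m*r)).le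
    have e : m*r = 2*r/d := by rw [hm, div_mul_eq_mul_div]
    linarith
  have h6 : (0:ℝ) ≤ M := by exact_mod_cast hM0
  refine h2.trans ?_
  rw [sq]
  gcongr

namespace HamSys
variable {α β : ℂ} {p q : ℂ → ℂ}

lemma bigE (h : HamSys α β p q) {z : ℂ} (hz : z ∈ hamE p q) (B : ℝ) :
    ∀ᶠ a in 𝓝 z, a ∉ hamE p q → B ≤ hamN (p a) (q a) := by
  have h1 := (h.tendstoN hz).eventually_ge_atTop B
  rw [eventually_nhdsWithin_iff] at h1
  filter_upwards [h1] with a ha haE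
  apply ha
  rintro rfl
  exact haE hz

lemma countBound (h : HamSys α β p q) : ∃ C : ℝ, 0 ≤ C ∧ ∀ r : ℝ, 1 ≤ r →
    (hamE p q ∩ Metric.closedBall 0 r).Finite ∧ ((hamE p q ∩ Metric.closedBall 0 r).ncard : ℝ) ≤ C*r^4 := by
  obtain ⟨K, δ, hK, hδ0, hδ1, hloc⟩ := h.localLemma
  refine ⟨(4/δ+3)^2, by positivity, ?_⟩
  intro r hr
  have hg := grid_count (hamE p q ∩ Metric.closedBall 0 r) r (δ/r) (by linarith) (by positivity) ?_ ?_
  · refine ⟨hg.1, hg.2.trans ?_⟩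
    have e : 2*(2*r/(δ/r)+1)+1 = 4/δ*r^2+3 := by field_simp; ring
    rw [e, show (4/δ+3)^2*r^4 = ((4/δ+3)*r^2)^2 by ring]
    have : 1 ≤ r^2 := by nlinarith
    gcongr
    nlinarith
  · intro z hz
    simpa using hz.2
  · intro z hz w hw hzw
    by_contra hlt
    push Not at hlt
    have hz1 : ‖z‖ ≤ r := by simpa using hz.2
    obtain ⟨h1, h2, h3, h4⟩ := hloc r hr z hz1 (h.bigE hz.1 _)
    have hzb : z ∈ Metric.ball z (δ/r) := Metric.mem_ball_self (by positivity)
    have hwb : w ∈ Metric.ball z (δ/r) := by rw [Metric.mem_ball, dist_comm]; exact hlt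
    have h5 := h2 z hzb w hwb
    rw [h3 z hzb hz.1, h3 w hwb hw.1] at h5
    simp at h5
    have : ‖z - w‖ = 0 := le_antisymm (by linarith) (norm_nonneg _)
    exact hzw (sub_eq_zero.1 (norm_eq_zero.1 this))

lemma mult_zero {f : ℂ → ℂ} {z : ℂ} (hf : AnalyticAt ℂ f z) : poleMult f z = 0 := by
  apply Nat.eq_zero_of_le_zero
  apply Nat.sInf_le
  refine ⟨f z, ?_⟩
  simpa using hf.continuousAt.tendsto.mono_left nhdsWithin_le_nhds

lemma mult_one {f : ℂ → ℂ} {z : ℂ} (hf : MeromorphicAt f z) (B : ℝ)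
    (hb : ∀ᶠ w in 𝓝[≠] z, ‖(w - z) * f w‖ ≤ B) : poleMult f z ≤ 1 := by
  apply Nat.sInf_le
  have hm : MeromorphicAt (fun w => (w - z) * f w) z := by
    have h1 : MeromorphicAt (fun w => w - z) z := by fun_prop
    exact h1.mul hf
  simp only [pow_one, Set.mem_ofPred_eq]
  by_cases ho : 0 ≤ meromorphicOrderAt (fun w => (w - z) * f w) z
  · exact (tendsto_nhds_iff_meromorphicOrderAt_nonneg hm).2 ho
  · push Not at ho
    exfalso
    have h1 := tendsto_norm_atTop_iff_cobounded.2 ((tendsto_cobounded_iff_meromorphicOrderAt_neg hm).2 ho)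
    obtain ⟨w, hw1, hw2⟩ := (hb.and (h1.eventually_gt_atTop B)).exists
    linarith

lemma mult_le (h : HamSys α β p q) (z : ℂ) : poleMult p z ≤ 1 ∧ poleMult q z ≤ 1 := by
  by_cases hz : z ∈ hamE p q
  · obtain ⟨K, δ, hK, hδ0, hδ1, hloc⟩ := h.localLemma
    set r := ‖z‖ + 1
    have hr : 1 ≤ r := by have := norm_nonneg z; linarith
    obtain ⟨h1, h2, h3, h4⟩ := hloc r hr z (by linarith) (h.bigE hz _)
    have hzb : z ∈ Metric.ball z (δ/r) := Metric.mem_ball_self (by positivity)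
    have key : ∀ᶠ w in 𝓝[≠] z, ‖p w‖ ≤ 2*‖q w‖ ∧ ‖w - z‖*‖q w‖ ≤ 4 := by
      filter_upwards [h.evR z, (Metric.isOpen_ball.eventually_mem hzb).filter_mono nhdsWithin_le_nhds] with w hw1 hw2
      have h5 := h4 w hw2 hw1
      refine ⟨h5.1, ?_⟩
      have h6 := h2 w hw2 z hzb
      rw [h3 z hzb hz] at h6
      simp only [inv_zero, sub_zero, norm_inv] at h6
      have h7 : 0 < ‖q w‖ := norm_pos_iff.2 h5.2
      have h8 := mul_le_mul_of_nonneg_right h6 h7.le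
      rw [inv_mul_cancel₀ h7.ne'] at h8
      linarith
    refine ⟨mult_one (h.nfp z).meromorphicAt 8 ?_, mult_one (h.nfq z).meromorphicAt 4 ?_⟩
    · filter_upwards [key] with w hw
      rw [norm_mul]
      nlinarith [norm_nonneg (w - z)]
    · filter_upwards [key] with w hw
      rw [norm_mul]
      exact hw.2
  · simp only [hamE, Set.mem_ofPred_eq, not_not] at hz
    rw [mult_zero hz.1, mult_zero hz.2]
    simp

end HamSys

lemma counting_bound (f : ℂ → ℂ) (E : Set ℂ) (hf0 : ∀ z ∉ E, poleMult f z = 0)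
    (hf1 : ∀ z, poleMult f z ≤ 1) (C : ℝ) (hC0 : 0 ≤ C)
    (hC : ∀ r : ℝ, 1 ≤ r → (E ∩ Metric.closedBall 0 r).Finite ∧ ((E ∩ Metric.closedBall 0 r).ncard : ℝ) ≤ C*r^4) :
    ∃ C' : ℝ, ∀ r : ℝ, 1 ≤ r → countingN f r ≤ C'*r^4 := by
  have hsupp : Function.support (fun z => (poleMult f z : ℝ)) ⊆ E := by
    intro z hz
    by_contra hzE
    exact hz (by simp [hf0 z hzE])
  have hfin : ∀ t : ℝ, (E ∩ Metric.closedBall 0 t).Finite := by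
    intro t
    refine (hC (max 1 t) (le_max_left _ _)).1.subset ?_
    exact Set.inter_subset_inter_right _ (Metric.closedBall_subset_closedBall (le_max_right _ _))
  have hn : ∀ t : ℝ, nPoles f t ≤ ((E ∩ Metric.closedBall 0 t).ncard : ℝ) := by
    intro t
    have : nPoles f t = ∑ z ∈ (hfin t).toFinset, (poleMult f z : ℝ) := by
      apply finsum_mem_eq_sum_of_inter_support_eq
      ext z
      simp only [Set.mem_inter_iff, Set.Finite.coe_toFinset]
      constructor
      · rintro ⟨h1, h2⟩; exact ⟨⟨hsupp h2, h1⟩, h2⟩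
      · rintro ⟨h1, h2⟩; exact ⟨h1.2, h2⟩
    rw [this, Set.ncard_eq_toFinset_card _ (hfin t)]
    calc _ ≤ ∑ z ∈ (hfin t).toFinset, (1:ℝ) := Finset.sum_le_sum (fun z _ => by exact_mod_cast hf1 z)
      _ = _ := by simp
  have hnn : 0 ≤ nPoles f 0 := by
    unfold nPoles
    exact finsum_nonneg (fun z => finsum_nonneg (fun _ => Nat.cast_nonneg _))
  have heps : ∃ ε : ℝ, 0 < ε ∧ ε ≤ 1 ∧ ∀ t, 0 < t → t < ε → nPoles f t = nPoles f 0 := by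
    have h1 : ((E ∩ Metric.closedBall 0 1) \ {0}).Finite := (hfin 1).subset Set.sdiff_subset
    have h2 : ((E ∩ Metric.closedBall 0 1) \ {0})ᶜ ∈ 𝓝 (0:ℂ) := h1.isClosed.isOpen_compl.mem_nhds (by simp)
    obtain ⟨ε, hε, hb⟩ := Metric.mem_nhds_iff.1 h2
    refine ⟨min ε 1, by positivity, min_le_right _ _, ?_⟩
    intro t ht0 ht
    apply finsum_mem_inter_support_eq
    ext z
    simp only [Set.mem_inter_iff, and_congr_left_iff]
    intro hz
    constructor
    · intro hzt
      rw [Metric.mem_closedBall] at hzt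
      have h3 : z ∈ Metric.ball (0:ℂ) ε := by
        rw [Metric.mem_ball]; exact hzt.trans_lt (ht.trans_le (min_le_left _ _))
      have h4 := hb h3
      have h5 : z ∈ Metric.closedBall (0:ℂ) 1 := by
        rw [Metric.mem_closedBall]; exact (hzt.trans_lt (ht.trans_le (min_le_right _ _))).le
      by_contra h6
      apply h4
      refine ⟨⟨hsupp hz, h5⟩, ?_⟩
      intro h7
      apply h6
      rw [Set.mem_singleton_iff.1 h7]
      simp
    · intro hzt
      exact Metric.closedBall_subset_closedBall ht0.le hzt
  obtain ⟨ε, hε0, hε1, hε⟩ := heps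
  set D := C/ε^4 with hD
  have hD0 : 0 ≤ D := by positivity
  have hCD : C ≤ D := by
    rw [hD, le_div_iff₀ (by positivity)]
    have : ε^4 ≤ 1 := pow_le_one₀ hε0.le hε1
    nlinarith
  have hbd : ∀ t : ℝ, 0 < t → nPoles f t - nPoles f 0 ≤ D*t^4 := by
    intro t ht
    rcases lt_or_ge t ε with h1 | h1
    · rw [hε t ht h1, sub_self]; positivity
    · rcases le_or_gt 1 t with h2 | h2
      · have := (hn t).trans (hC t h2).2
        have h3 : C*t^4 ≤ D*t^4 := by gcongr
        linarith
      · have h3 : ((E ∩ Metric.closedBall 0 t).ncard : ℝ) ≤ ((E ∩ Metric.closedBall 0 1).ncard : ℝ) := by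
          exact_mod_cast Set.ncard_le_ncard (Set.inter_subset_inter_right _ (Metric.closedBall_subset_closedBall h2.le)) (hfin 1)
        have h4 := (hC 1 le_rfl).2
        have h5 : C ≤ D*t^4 := by
          rw [hD, div_mul_eq_mul_div, le_div_iff₀ (by positivity)]
          gcongr
        have := hn t
        linarith
  refine ⟨D + nPoles f 0, ?_⟩
  intro r hr
  have hI : (∫ t in (0:ℝ)..r, (nPoles f t - nPoles f 0) / t) ≤ D*r^4 := by
    by_cases hint : IntervalIntegrable (fun t => (nPoles f t - nPoles f 0) / t) MeasureTheory.volume 0 r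
    · have h1 : (∫ t in (0:ℝ)..r, (nPoles f t - nPoles f 0) / t) ≤ ∫ t in (0:ℝ)..r, D*t^3 := by
        apply intervalIntegral.integral_mono_on (by linarith) hint (Continuous.intervalIntegrable (by fun_prop) _ _)
        intro t ht
        rcases ht.1.eq_or_lt with h2 | h2
        · rw [← h2]; simp
        · rw [div_le_iff₀ h2]
          have := hbd t h2
          nlinarith
      refine h1.trans ?_
      rw [intervalIntegral.integral_const_mul, integral_pow]
      have : 0 ≤ D*r^4 := by positivity
      norm_num
      linarith
    · rw [intervalIntegral.integral_undef hint]; positivity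
  have hlog : Real.log r ≤ r^4 := by
    have h1 := Real.log_le_self (show 0 ≤ r by linarith)
    have h2 : r^1 ≤ r^4 := pow_le_pow_right₀ hr (by norm_num)
    linarith
  have := mul_le_mul_of_nonneg_left hlog hnn
  unfold countingN
  linarith


/-- point on the circle -/
noncomputable def ccp (r x : ℝ) : ℂ := (r : ℂ) * Complex.exp ((x : ℂ) * Complex.I)

lemma ccp_norm (r x : ℝ) (hr : 0 ≤ r) : ‖ccp r x‖ = r := by
  simp [ccp, Complex.norm_exp_ofReal_mul_I, abs_of_nonneg hr]

lemma ccp_cont (r : ℝ) : Continuous (ccp r) := by unfold ccp; fun_prop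

lemma ccp_sub (r x y : ℝ) (hr : 0 ≤ r) :
    ‖ccp r x - ccp r y‖ = r * ‖Complex.exp (Complex.I * ((x - y : ℝ) : ℂ)) - 1‖ := by
  have e : ccp r x - ccp r y = (r : ℂ) * (Complex.exp ((y : ℂ) * Complex.I) * (Complex.exp (Complex.I * ((x - y : ℝ) : ℂ)) - 1)) := by
    unfold ccp
    rw [mul_sub, ← Complex.exp_add, mul_sub, mul_one]
    push_cast
    rw [show (y : ℂ) * Complex.I + Complex.I * ((x : ℂ) - y) = x * Complex.I by ring]
  rw [e, norm_mul, norm_mul, Complex.norm_exp_ofReal_mul_I, one_mul, Complex.norm_real, Real.norm_of_nonneg hr]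

lemma ccp_upper (r x y : ℝ) (hr : 0 ≤ r) : ‖ccp r x - ccp r y‖ ≤ r * |x - y| := by
  rw [ccp_sub r x y hr]
  gcongr
  exact Real.norm_exp_I_mul_ofReal_sub_one_le

lemma ccp_lower (r x y : ℝ) (hr : 0 ≤ r) (hxy : |x - y| ≤ Real.pi) : r * (|x - y|/2) ≤ ‖ccp r x - ccp r y‖ := by
  rw [ccp_sub r x y hr]
  gcongr
  rw [Complex.norm_exp_I_mul_ofReal_sub_one, norm_mul, Real.norm_eq_abs, Real.norm_eq_abs]
  have e : |(x-y)/2| = |x-y|/2 := by rw [abs_div]; norm_num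
  have h1 := Real.mul_abs_le_abs_sin (x := (x-y)/2) (by rw [e]; linarith)
  rw [e] at h1
  have h2 : 1/2 ≤ 2/Real.pi := by
    rw [le_div_iff₀ Real.pi_pos]
    linarith [Real.pi_lt_four]
  have h3 : 1/2*(|x-y|/2) ≤ 2/Real.pi*(|x-y|/2) := by gcongr
  have h4 : |(2:ℝ)| = 2 := by norm_num
  rw [h4]
  linarith

lemma mul_log_ge' (x : ℝ) (hx : 0 ≤ x) : -1 ≤ x * Real.log x := by
  rcases hx.eq_or_lt with h | h
  · rw [← h]; simp
  · have := mul_le_mul_of_nonneg_left (Real.one_sub_inv_le_log_of_pos h) hx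
    rw [mul_sub, mul_inv_cancel₀ h.ne'] at this
    linarith

lemma log_int (y a b : ℝ) : IntervalIntegrable (fun x => Real.log (x - y)) MeasureTheory.volume a b := by
  have := (intervalIntegral.intervalIntegrable_log' (a := a - y) (b := b - y)).comp_sub_right y
  simpa using this

lemma log_integral (y : ℝ) (hy : y ∈ Set.Icc 0 (2*Real.pi)) :
    ∫ x in (0:ℝ)..(2*Real.pi), (Real.log (2*Real.pi) - Real.log (x - y)) ≤ 2*Real.pi*(Real.log (2*Real.pi) + 2) := by
  rw [intervalIntegral.integral_sub (by simp) (log_int y _ _), intervalIntegral.integral_const,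
    intervalIntegral.integral_comp_sub_right, integral_log, smul_eq_mul, zero_sub, Real.log_neg_eq_log]
  have h1 := mul_log_ge' y hy.1
  have h2 := mul_log_ge' (2*Real.pi - y) (by linarith [hy.2])
  have := Real.pi_gt_three
  nlinarith

lemma prox_abs (f : ℂ → ℂ) (r : ℝ) (hr : 1 ≤ r) (B : ℝ) (hB : 0 ≤ B) (n : ℕ) (φ : ℕ → ℝ)
    (hφ : ∀ k < n, φ k ∈ Set.Icc 0 (2*Real.pi)) (E : Set ℂ) (hE : E.Countable)
    (hb : ∀ x ∈ Set.Icc 0 (2*Real.pi), ccp r x ∉ E → (∀ k < n, x ≠ φ k) →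
      logPlus ‖f (ccp r x)‖ ≤ B + ∑ k ∈ Finset.range n, (Real.log (2*Real.pi) - Real.log (x - φ k))) :
    proximity f r ≤ B + n * (Real.log (2*Real.pi) + 2) := by
  have hpi := Real.pi_gt_three
  have hl : 0 ≤ Real.log (2*Real.pi) := Real.log_nonneg (by linarith)
  have hR : 0 ≤ B + n * (Real.log (2*Real.pi) + 2) := by positivity
  unfold proximity
  rw [inv_mul_le_iff₀ (by positivity)]
  change ∫ x in (0:ℝ)..(2*Real.pi), logPlus ‖f (ccp r x)‖ ≤ _
  by_cases hint : IntervalIntegrable (fun x => logPlus ‖f (ccp r x)‖) MeasureTheory.volume 0 (2*Real.pi)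
  · have hgi : ∀ k ∈ Finset.range n, IntervalIntegrable (fun x => Real.log (2*Real.pi) - Real.log (x - φ k)) MeasureTheory.volume 0 (2*Real.pi) :=
      fun k _ => IntervalIntegrable.sub (by simp) (log_int _ _ _)
    have hsi : IntervalIntegrable (fun x => ∑ k ∈ Finset.range n, (Real.log (2*Real.pi) - Real.log (x - φ k))) MeasureTheory.volume 0 (2*Real.pi) := by
      have e : (fun x => ∑ k ∈ Finset.range n, (Real.log (2*Real.pi) - Real.log (x - φ k))) =
          ∑ k ∈ Finset.range n, (fun x => Real.log (2*Real.pi) - Real.log (x - φ k)) := by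
        ext x; rw [Finset.sum_apply]
      rw [e]
      exact IntervalIntegrable.sum (Finset.range n) hgi
    have hci : IntervalIntegrable (fun _ : ℝ => B) MeasureTheory.volume 0 (2*Real.pi) := by simp
    have h1 : ∫ x in (0:ℝ)..(2*Real.pi), logPlus ‖f (ccp r x)‖ ≤
        ∫ x in (0:ℝ)..(2*Real.pi), (B + ∑ k ∈ Finset.range n, (Real.log (2*Real.pi) - Real.log (x - φ k))) := by
      apply intervalIntegral.integral_mono_ae_restrict (by linarith) hint (hci.add hsi)
      have hc1 : (circleMap 0 r ⁻¹' E).Countable := hE.preimage_circleMap 0 (by linarith)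
      have hc2 : ((Finset.range n).image φ : Set ℝ).Countable := (Finset.finite_toSet _).countable
      rw [EventuallyLE, MeasureTheory.ae_restrict_iff' measurableSet_Icc]
      filter_upwards [hc1.ae_notMem MeasureTheory.volume, hc2.ae_notMem MeasureTheory.volume] with x hx1 hx2 hx3
      apply hb x hx3
      · intro h
        apply hx1
        simpa [circleMap, ccp] using h
      · intro k hk hxk
        apply hx2
        rw [hxk]
        simp only [Finset.coe_image, Finset.coe_range]
        exact ⟨k, hk, rfl⟩
    refine h1.trans ?_
    rw [intervalIntegral.integral_add hci hsi, intervalIntegral.integral_finsetSum hgi, intervalIntegral.integral_const]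
    have h2 : ∑ k ∈ Finset.range n, ∫ x in (0:ℝ)..(2*Real.pi), (Real.log (2*Real.pi) - Real.log (x - φ k)) ≤
        ∑ k ∈ Finset.range n, 2*Real.pi*(Real.log (2*Real.pi) + 2) :=
      Finset.sum_le_sum (fun k hk => log_integral _ (hφ k (Finset.mem_range.1 hk)))
    rw [Finset.sum_const, Finset.card_range, nsmul_eq_mul] at h2
    rw [smul_eq_mul, sub_zero]
    nlinarith
  · rw [intervalIntegral.integral_undef hint]
    positivity

namespace HamSys
variable {α β : ℂ} {p q : ℂ → ℂ}

lemma prox (h : HamSys α β p q) : ∃ C : ℝ, ∀ f : ℂ → ℂ, ∀ E2 : Set ℂ, E2.Countable →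
    (∀ z ∉ E2, ‖f z‖ ≤ max ‖p z‖ ‖q z‖) → ∀ r : ℝ, 1 ≤ r → proximity f r ≤ C * r^4 := by
  obtain ⟨K, δ, hK, hδ0, hδ1, hloc⟩ := h.localLemma
  have hpi := Real.pi_gt_three
  have hpi4 := Real.pi_lt_four
  have hl : 0 ≤ Real.log (2*Real.pi) := Real.log_nonneg (by linarith)
  refine ⟨64*K + (9/δ) * (Real.log (2*Real.pi) + 2), ?_⟩
  intro f E2 hE2 hf r hr
  have hr0 : 0 < r := by linarith
  set n : ℕ := ⌈8*r^2/δ⌉₊ with hn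
  have hr2 : 1 ≤ r^2 := by nlinarith
  have hrd : 1 ≤ r^2/δ := by rw [le_div_iff₀ hδ0]; linarith
  have hnge : 8*r^2/δ ≤ n := Nat.le_ceil _
  have e8 : 8*r^2/δ = 8*(r^2/δ) := by ring
  have hnle : (n:ℝ) ≤ 9/δ*r^2 := by
    have h1 := (Nat.ceil_lt_add_one (show 0 ≤ 8*r^2/δ by positivity)).le
    have e9 : 9/δ*r^2 = 9*(r^2/δ) := by ring
    rw [← hn] at h1
    linarith
  have hn8 : (8:ℝ) ≤ n := by linarith
  have hn0 : (0:ℝ) < n := by linarith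
  set L := 2*Real.pi/n with hL
  have hL0 : 0 < L := by positivity
  have hLpi : L ≤ Real.pi := by
    rw [hL, div_le_iff₀ hn0]; nlinarith
  have hLr : r*L < δ/r := by
    rw [hL, lt_div_iff₀ hr0, show r*(2*Real.pi/n)*r = (2*Real.pi*r^2)/n by ring, div_lt_iff₀ hn0]
    rw [div_le_iff₀ hδ0] at hnge
    nlinarith
  have hnL : n*L = 2*Real.pi := by rw [hL]; field_simp
  -- key arcs
  have harc : ∀ k : ℕ, k < n → ∃ φ ∈ Set.Icc (k*L) ((k+1)*L), ∀ x ∈ Set.Icc (k*L) ((k+1)*L),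
      ccp r x ∉ hamE p q → x ≠ φ → max ‖p (ccp r x)‖ ‖q (ccp r x)‖ ≤ 64*K*r*(2*Real.pi/|x - φ|) := by
    intro k hk
    have hLab : ∀ x ∈ Set.Icc (k*L) ((k+1)*L), ∀ y ∈ Set.Icc (k*L) ((k+1)*L), |x - y| ≤ L := by
      intro x hx y hy
      rw [abs_le]
      constructor <;> linarith [hx.1, hx.2, hy.1, hy.2]
    by_cases hbig : ∃ y ∈ Set.Icc (k*L) ((k+1)*L), ccp r y ∈ hamE p q ∨ 4*K^2*r^2 < hamN (p (ccp r y)) (q (ccp r y))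
    · obtain ⟨y, hy, hyb⟩ := hbig
      have hev : ∀ᶠ a in 𝓝 (ccp r y), a ∉ hamE p q → 4*K^2*r^2 ≤ hamN (p a) (q a) := by
        by_cases hyE : ccp r y ∈ hamE p q
        · exact h.bigE hyE _
        · have h1 := hyb.resolve_left hyE
          have h2 := (h.contN hyE).eventually_const_lt h1
          filter_upwards [h2] with a ha _ using ha.le
      obtain ⟨h1, h2, h3, h4⟩ := hloc r hr (ccp r y) (ccp_norm r y hr0.le).le hev
      have hin : ∀ x ∈ Set.Icc (k*L) ((k+1)*L), ccp r x ∈ Metric.ball (ccp r y) (δ/r) := by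
        intro x hx
        rw [Metric.mem_ball, dist_eq_norm]
        refine (ccp_upper r x y hr0.le).trans_lt (lt_of_le_of_lt ?_ hLr)
        gcongr
        exact hLab x hx y hy
      have hco : ContinuousOn (fun x => ‖(q (ccp r x))⁻¹‖) (Set.Icc (k*L) ((k+1)*L)) :=
        (h1.comp (ccp_cont r).continuousOn hin).norm
      obtain ⟨φ, hφ, hmin⟩ := isCompact_Icc.exists_isMinOn ⟨y, hy⟩ hco
      refine ⟨φ, hφ, ?_⟩
      intro x hx hxE hne
      have h5 := h2 _ (hin x hx) _ (hin φ hφ)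
      have h6 : ‖(q (ccp r φ))⁻¹‖ ≤ ‖(q (ccp r x))⁻¹‖ := hmin hx
      have h7 := norm_sub_le (q (ccp r x))⁻¹ (q (ccp r φ))⁻¹
      have h8 := ccp_lower r x φ hr0.le ((hLab x hx φ hφ).trans hLpi)
      obtain ⟨h9, h10⟩ := h4 _ (hin x hx) hxE
      have h11 : 0 < ‖q (ccp r x)‖ := norm_pos_iff.2 h10
      have h12 : r*|x-φ|/16 ≤ ‖q (ccp r x)‖⁻¹ := by rw [← norm_inv]; linarith
      have h13 : 0 < |x-φ| := abs_pos.2 (sub_ne_zero.2 hne)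
      have h14 : ‖q (ccp r x)‖ ≤ 16/|x-φ| := by
        rw [le_div_iff₀ h13]
        have := mul_le_mul_of_nonneg_right h12 h11.le
        rw [inv_mul_cancel₀ h11.ne'] at this
        nlinarith [mul_pos h11 h13]
      have h15 : 32/|x-φ| ≤ 64*K*r*(2*Real.pi/|x - φ|) := by
        rw [← mul_div_assoc]
        gcongr
        have : 1 ≤ K*r := by nlinarith
        nlinarith
      have h16 : 32/|x-φ| = 2*(16/|x-φ|) := by ring
      apply max_le <;> linarith
    · push Not at hbig
      refine ⟨k*L, ⟨le_rfl, by nlinarith⟩, ?_⟩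
      intro x hx hxE hne
      have h1 := (hbig x hx).2
      have h2 : √(hamN (p (ccp r x)) (q (ccp r x))) ≤ 2*K*r := by
        apply Real.sqrt_le_iff.2
        exact ⟨by positivity, by nlinarith⟩
      have h3 := ham_p_le (p (ccp r x)) (q (ccp r x))
      have h4 := ham_q_le (p (ccp r x)) (q (ccp r x))
      have h13 : 0 < |x-k*L| := abs_pos.2 (sub_ne_zero.2 hne)
      have h5 : 1 ≤ 2*Real.pi/|x-k*L| := by
        rw [le_div_iff₀ h13]
        have := hLab x hx (k*L) ⟨le_rfl, by nlinarith⟩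
        linarith
      have h6 : 64*K*r*1 ≤ 64*K*r*(2*Real.pi/|x - k*L|) := by gcongr
      have h7 : 0 ≤ K*r := by positivity
      apply max_le <;> linarith
  choose! φ hφ hφb using harc
  have hφ2 : ∀ k < n, φ k ∈ Set.Icc 0 (2*Real.pi) := by
    intro k hk
    have h1 := hφ k hk
    have h2 : ((k:ℝ)+1) ≤ n := by exact_mod_cast hk
    refine ⟨le_trans (by positivity) h1.1, h1.2.trans ?_⟩
    rw [← hnL]; gcongr
  have hmain := prox_abs f r hr (64*K*r) (by positivity) n φ hφ2 (hamE p q ∪ E2) (h.countE.union hE2) ?_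
  · refine hmain.trans ?_
    have h1 : (n:ℝ)*(Real.log (2*Real.pi) + 2) ≤ 9/δ*r^2*(Real.log (2*Real.pi) + 2) := by gcongr
    have h2 : r^2 ≤ r^4 := pow_le_pow_right₀ hr (by norm_num)
    have h3 : r^1 ≤ r^4 := pow_le_pow_right₀ hr (by norm_num)
    have h4 : 9/δ*r^2*(Real.log (2*Real.pi) + 2) ≤ 9/δ*r^4*(Real.log (2*Real.pi) + 2) := by gcongr
    have h5 : 64*K*r^1 ≤ 64*K*r^4 := by gcongr
    rw [pow_one] at h5
    linarith
  · intro x hx hxE hxn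
    simp only [Set.mem_union, not_or] at hxE
    have hterm : ∀ k < n, 0 ≤ Real.log (2*Real.pi) - Real.log (x - φ k) := by
      intro k hk
      rw [sub_nonneg, ← Real.log_abs (x - φ k)]
      have h13 : 0 < |x-φ k| := abs_pos.2 (sub_ne_zero.2 (hxn k hk))
      apply Real.log_le_log h13
      rw [abs_le]
      constructor <;> linarith [hx.1, hx.2, (hφ2 k hk).1, (hφ2 k hk).2]
    have hsum : 0 ≤ ∑ k ∈ Finset.range n, (Real.log (2*Real.pi) - Real.log (x - φ k)) :=
      Finset.sum_nonneg (fun k hk => hterm k (Finset.mem_range.1 hk))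
    have hKr : 0 < 64*K*r := by positivity
    apply max_le (by linarith)
    -- find arc
    obtain ⟨k, hk, hxk⟩ : ∃ k < n, x ∈ Set.Icc (k*L) ((k+1)*L) := by
      rcases hx.2.eq_or_lt with h1 | h1
      · refine ⟨n-1, by have : 0 < n := by exact_mod_cast hn0
                        omega, ?_⟩
        have h2 : ((n-1 : ℕ) : ℝ) = n - 1 := by
          rw [Nat.cast_sub (by exact_mod_cast (by linarith : (1:ℝ) ≤ n))]; simp
        rw [h2, h1, ← hnL]
        constructor <;> nlinarith
      · refine ⟨⌊x/L⌋₊, ?_, ?_, ?_⟩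
        · rw [Nat.floor_lt (div_nonneg hx.1 hL0.le), div_lt_iff₀ hL0]; linarith
        · have := Nat.floor_le (div_nonneg hx.1 hL0.le)
          rwa [le_div_iff₀ hL0] at this
        · have := (Nat.lt_floor_add_one (x/L)).le
          rwa [div_le_iff₀ hL0] at this
    have h1 := hφb k hk x hxk hxE.1 (hxn k hk)
    have h2 := (hf _ hxE.2).trans h1
    have h13 : 0 < |x-φ k| := abs_pos.2 (sub_ne_zero.2 (hxn k hk))
    have h3 : Real.log (2*Real.pi) - Real.log (x - φ k) ≤ ∑ k ∈ Finset.range n, (Real.log (2*Real.pi) - Real.log (x - φ k)) :=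
      Finset.single_le_sum (f := fun k => Real.log (2*Real.pi) - Real.log (x - φ k)) (fun k hk => hterm k (Finset.mem_range.1 hk)) (Finset.mem_range.2 hk)
    rcases (norm_nonneg (f (ccp r x))).eq_or_lt with h0 | h0
    · rw [← h0, Real.log_zero]; linarith
    · have h4 := Real.log_le_log h0 h2
      rw [Real.log_mul hKr.ne' (by positivity), Real.log_div (by positivity) h13.ne', Real.log_abs] at h4
      have h5 := Real.log_le_self hKr.le
      linarith

end HamSys


lemma nf_facts {f : ℂ → ℂ} (hf : MeromorphicOn f Set.univ) : ∃ F : ℂ → ℂ, (∀ z, MeromorphicNFAt F z) ∧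
    (∀ z, f =ᶠ[𝓝[≠] z] F) ∧ ∃ E : Set ℂ, E.Countable ∧ ∀ z ∉ E, f z = F z := by
  refine ⟨toMeromorphicNFOn f Set.univ, fun z => meromorphicNFOn_toMeromorphicNFOn f Set.univ (Set.mem_univ z),
    fun z => (hf.toMeromorphicNFOn_eq_self_on_nhdsNE (Set.mem_univ z)).symm, {z | AnalyticAt ℂ f z}ᶜ, ?_, ?_⟩
  · have h1 : Meromorphic f := fun z => hf z (Set.mem_univ z)
    exact h1.countable_compl_analyticAt
  · intro z hz
    simp only [Set.mem_compl_iff, Set.mem_ofPred_eq, not_not] at hz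
    rw [toMeromorphicNFOn_eq_toMeromorphicNFAt hf (Set.mem_univ z), toMeromorphicNFAt_eq_self.2 hz.meromorphicNFAt]

lemma ev_nhds {f F : ℂ → ℂ} {z : ℂ} (h : f =ᶠ[𝓝[≠] z] F) : ∀ᶠ w in 𝓝[≠] z, f =ᶠ[𝓝 w] F := by
  have h1 := eventually_eventually_nhdsWithin.2 h
  filter_upwards [h1, self_mem_nhdsWithin] with w hw hwz
  rwa [isOpen_compl_singleton.nhdsWithin_eq hwz] at hw

lemma poleMult_congr {f F : ℂ → ℂ} {z : ℂ} (h : f =ᶠ[𝓝[≠] z] F) : poleMult f z = poleMult F z := by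
  unfold poleMult
  congr 1
  ext k
  simp only [Set.mem_ofPred_eq]
  refine exists_congr fun c => tendsto_congr' ?_
  filter_upwards [h] with w hw
  rw [hw]

lemma hamSys_nf {α β : ℂ} {p q P Q : ℂ → ℂ} (h : IsHamSolution α β p q)
    (hP : ∀ z, MeromorphicNFAt P z) (hQ : ∀ z, MeromorphicNFAt Q z)
    (hpP : ∀ z, p =ᶠ[𝓝[≠] z] P) (hqQ : ∀ z, q =ᶠ[𝓝[≠] z] Q) : HamSys α β P Q := by
  refine ⟨hP, hQ, ?_⟩
  intro z hPz hQz
  have key : ∀ᶠ w in 𝓝[≠] z, deriv P w = -(Q w) ^ 2 - w * P w - α ∧ deriv Q w = (P w) ^ 2 + w * Q w + β := by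
    filter_upwards [ev_nhds (hpP z), ev_nhds (hqQ z), (h.1 z (Set.mem_univ z)).eventually_analyticAt,
      (h.2.1 z (Set.mem_univ z)).eventually_analyticAt] with w h1 h2 h3 h4
    have h5 := h.2.2 w h3 h4
    rw [h1.deriv_eq, h2.deriv_eq, h1.eq_of_nhds, h2.eq_of_nhds] at h5
    exact h5
  have cP := hPz.continuousAt
  have cQ := hQz.continuousAt
  have dP := hPz.deriv.continuousAt
  have dQ := hQz.deriv.continuousAt
  constructor
  · have c1 : ContinuousAt (fun w => -(Q w) ^ 2 - w * P w - α) z := by fun_prop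
    refine tendsto_nhds_unique_of_eventuallyEq (dP.tendsto.mono_left (nhdsWithin_le_nhds (s := {z}ᶜ)))
      (c1.tendsto.mono_left (nhdsWithin_le_nhds (s := {z}ᶜ))) (key.mono fun w hw => hw.1)
  · have c1 : ContinuousAt (fun w => (P w) ^ 2 + w * Q w + β) z := by fun_prop
    refine tendsto_nhds_unique_of_eventuallyEq (dQ.tendsto.mono_left (nhdsWithin_le_nhds (s := {z}ᶜ)))
      (c1.tendsto.mono_left (nhdsWithin_le_nhds (s := {z}ᶜ))) (key.mono fun w hw => hw.2)

/-- Any meromorphic solution of the Hamiltonian system on `ℂ` has order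
of growth at most four: `T(r, p) + T(r, q) ≤ C·r⁴` for `r ≥ 1`. -/
theorem stmt_7 (α β : ℂ) (p q : ℂ → ℂ) (h : IsHamSolution α β p q) :
    ∃ C : ℝ, ∀ r : ℝ, 1 ≤ r → nevT p r + nevT q r ≤ C * r ^ 4 := by
  obtain ⟨P, hP, hpP, E1, hE1, hE1p⟩ := nf_facts h.1
  obtain ⟨Q, hQ, hqQ, E2, hE2, hE2q⟩ := nf_facts h.2.1
  have H : HamSys α β P Q := hamSys_nf h hP hQ hpP hqQ
  obtain ⟨C, hC0, hC⟩ := H.countBound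
  obtain ⟨C1, hC1⟩ := counting_bound p (hamE P Q) (fun z hz => by
    simp only [hamE, Set.mem_ofPred_eq, not_not] at hz
    rw [poleMult_congr (hpP z)]; exact HamSys.mult_zero hz.1) (fun z => by
    rw [poleMult_congr (hpP z)]; exact (H.mult_le z).1) C hC0 hC
  obtain ⟨C2, hC2⟩ := counting_bound q (hamE P Q) (fun z hz => by
    simp only [hamE, Set.mem_ofPred_eq, not_not] at hz
    rw [poleMult_congr (hqQ z)]; exact HamSys.mult_zero hz.2) (fun z => by
    rw [poleMult_congr (hqQ z)]; exact (H.mult_le z).2) C hC0 hC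
  obtain ⟨C3, hC3⟩ := H.prox
  refine ⟨C1 + C2 + 2*C3, ?_⟩
  intro r hr
  have a1 := hC1 r hr
  have a2 := hC2 r hr
  have a3 := hC3 p E1 hE1 (fun z hz => by rw [hE1p z hz]; exact le_max_left _ _) r hr
  have a4 := hC3 q E2 hE2 (fun z hz => by rw [hE2q z hz]; exact le_max_right _ _) r hr
  unfold nevT
  linarith
end
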